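/- arXiv:1704.07717 — 5 statements merged into one kernel-verified Lean document; each statement's English description precedes it below -/
import Mathlib

section
/- Let m₁,m₂>0 and p ≥ −1/(m₁+m₂), and let (X,d_X,μ_X), (Y,d_Y,μ_Y) be metric measure spaces with σ-finite measures. If (Y,d_Y,μ_Y) satisfies BBL(p,m₂) and (X,d_X,μ_X) satisfies BBL(q,m₁) where q = p/(m₂p+1), then (X×Y,ρ,μ_{X×Y}) satisfies BBL(p,m₁+m₂). -/
open MeasureTheory Set Metric Filter
open scoped ENNReal NNReal Topology Pointwise

noncomputable section

/-- The `d`-convex combination `(1-λ)A ⋆_d λB` of two sets. -/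
def starComb {Z : Type*} (d : Z → Z → ℝ) (lam : ℝ) (A B : Set Z) : Set Z :=
  {z | ∃ a ∈ A, ∃ b ∈ B, d z a = lam * d a b ∧ d z b = (1 - lam) * d a b}

/-- A distance is strictly intrinsic: closed balls of radii summing to the distance
between their centers intersect. -/
def StrictlyIntrinsicDist {Z : Type*} (d : Z → Z → ℝ) : Prop :=
  ∀ x y : Z, ∀ r₁ r₂ : ℝ, 0 ≤ r₁ → 0 ≤ r₂ → r₁ + r₂ = d x y →
    ∃ z : Z, d z x ≤ r₁ ∧ d z y ≤ r₂

/-- The ℓ² (Euclidean) product metric on `X × Y`. -/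
def rho {X Y : Type*} [PseudoMetricSpace X] [PseudoMetricSpace Y] (a b : X × Y) : ℝ :=
  Real.sqrt (dist a.1 b.1 ^ 2 + dist a.2 b.2 ^ 2)

/-- The ℓ² (Euclidean) metric on a finite product of copies of a metric space. -/
def rhoPi {ι : Type*} [Fintype ι] {X : Type*} [PseudoMetricSpace X] (a b : ι → X) : ℝ :=
  Real.sqrt (∑ i, dist (a i) (b i) ^ 2)

open Classical in
/-- The `p`-th mean `M_p(a,b,λ)` of `a, b ∈ [0,∞]`, for `p ∈ ℝ ∪ {±∞}`, with the
convention that it vanishes whenever `a * b = 0`. -/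
def Mp (p : EReal) (lam : ℝ) (a b : ℝ≥0∞) : ℝ≥0∞ :=
  if a = 0 ∨ b = 0 then 0
  else if p = ⊤ then max a b
  else if p = ⊥ then min a b
  else if p = 0 then a ^ (1 - lam) * b ^ lam
  else (ENNReal.ofReal (1 - lam) * a ^ p.toReal + ENNReal.ofReal lam * b ^ p.toReal) ^ (1 / p.toReal)

open Classical in
/-- The `p`-th mean `M_p(a,b,λ)` of nonnegative reals, with the zero convention. -/
def MpR (p : EReal) (lam a b : ℝ) : ℝ :=
  if a = 0 ∨ b = 0 then 0
  else if p = ⊤ then max a b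
  else if p = ⊥ then min a b
  else if p = 0 then a ^ (1 - lam) * b ^ lam
  else ((1 - lam) * a ^ p.toReal + lam * b ^ p.toReal) ^ (1 / p.toReal)

/-- `(X,d,μ)` satisfies `BM(p)`. -/
def SatisfiesBM {X : Type*} [MeasurableSpace X] (d : X → X → ℝ) (μ : Measure X)
    (p : EReal) : Prop :=
  ∀ lam : ℝ, lam ∈ Ioo (0:ℝ) 1 → ∀ A B C : Set X, A.Nonempty → B.Nonempty →
    MeasurableSet A → MeasurableSet B → MeasurableSet C →
    μ A ≠ 0 → μ B ≠ 0 → starComb d lam A B ⊆ C →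
    Mp p lam (μ A) (μ B) ≤ μ C

/-- `(X,d,μ)` satisfies the general (linear) inequality `B̄M(1)`:
`μ(C) ≥ (1-λ)μ(A) + λμ(B)` for all nonempty measurable `A, B, C` with
`C ⊇ (1-λ)A ⋆ λB`. -/
def SatisfiesBMbarLinear {X : Type*} [MeasurableSpace X] (d : X → X → ℝ)
    (μ : Measure X) : Prop :=
  ∀ lam : ℝ, lam ∈ Ioo (0:ℝ) 1 → ∀ A B C : Set X, A.Nonempty → B.Nonempty →
    MeasurableSet A → MeasurableSet B → MeasurableSet C →
    starComb d lam A B ⊆ C →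
    ENNReal.ofReal (1 - lam) * μ A + ENNReal.ofReal lam * μ B ≤ μ C

/-- `(X,d,μ)` satisfies the general inequality `B̄M(p)` for a real `p > 0`:
`μ(C) ≥ ((1-λ)μ(A)^p + λμ(B)^p)^{1/p}` for all nonempty measurable `A, B, C`
with `C ⊇ (1-λ)A ⋆ λB`. -/
def SatisfiesBMbarPos {X : Type*} [MeasurableSpace X] (d : X → X → ℝ) (μ : Measure X)
    (p : ℝ) : Prop :=
  ∀ lam : ℝ, lam ∈ Ioo (0:ℝ) 1 → ∀ A B C : Set X, A.Nonempty → B.Nonempty →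
    MeasurableSet A → MeasurableSet B → MeasurableSet C →
    starComb d lam A B ⊆ C →
    (ENNReal.ofReal (1 - lam) * μ A ^ p + ENNReal.ofReal lam * μ B ^ p) ^ (1/p) ≤ μ C

/-- `(X,d,μ)` satisfies the weighted inequality `BM(p,q)`:
`μ(C)^p ≥ (1-λ)^q μ(A)^p + λ^q μ(B)^p` for all nonempty measurable sets of positive
measure with `C ⊇ (1-λ)A ⋆ λB`. -/
def SatisfiesBMW {X : Type*} [MeasurableSpace X] (d : X → X → ℝ) (μ : Measure X)
    (p q : ℝ) : Prop :=
  ∀ lam : ℝ, lam ∈ Ioo (0:ℝ) 1 → ∀ A B C : Set X, A.Nonempty → B.Nonempty →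
    MeasurableSet A → MeasurableSet B → MeasurableSet C →
    μ A ≠ 0 → μ B ≠ 0 → starComb d lam A B ⊆ C →
    ENNReal.ofReal ((1 - lam) ^ q) * μ A ^ p + ENNReal.ofReal (lam ^ q) * μ B ^ p ≤ μ C ^ p

/-- `(X,d,μ)` satisfies the Prékopa–Leindler inequality `PL`. -/
def SatisfiesPL {X : Type*} [MeasurableSpace X] (d : X → X → ℝ) (μ : Measure X) : Prop :=
  ∀ lam : ℝ, lam ∈ Ioo (0:ℝ) 1 → ∀ f g h : X → ℝ≥0∞,
    Measurable f → Measurable g → Measurable h →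
    (∀ x y z : X, d z x = lam * d x y → d z y = (1 - lam) * d x y →
      f x ^ (1 - lam) * g y ^ lam ≤ h z) →
    (∫⁻ x, f x ∂μ) ^ (1 - lam) * (∫⁻ x, g x ∂μ) ^ lam ≤ ∫⁻ x, h x ∂μ

open Classical in
/-- `(X,d,μ)` satisfies the Borell–Brascamp–Lieb inequality `BBL(p,m)`. -/
def SatisfiesBBL {X : Type*} [MeasurableSpace X] (d : X → X → ℝ) (μ : Measure X)
    (p m : ℝ) : Prop :=
  ∀ lam : ℝ, lam ∈ Ioo (0:ℝ) 1 → ∀ f g h : X → ℝ≥0∞,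
    Measurable f → Measurable g → Measurable h →
    (∀ x y z : X, d z x = lam * d x y → d z y = (1 - lam) * d x y →
      Mp (p : EReal) lam (f x) (g y) ≤ h z) →
    Mp (if m * p + 1 = 0 then (⊥ : EReal) else ((p / (m * p + 1) : ℝ) : EReal)) lam
      (∫⁻ x, f x ∂μ) (∫⁻ x, g x ∂μ) ≤ ∫⁻ x, h x ∂μ

/-- `φ : ℝ → ℝ` is positively decreasing: `t ↦ φ(t)` and `t ↦ φ(-t)` are
non-increasing on `[0,∞)`. -/
def PositivelyDecreasing (φ : ℝ → ℝ) : Prop :=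
  (∀ s t : ℝ, 0 ≤ s → s ≤ t → φ t ≤ φ s) ∧ (∀ s t : ℝ, 0 ≤ s → s ≤ t → φ (-t) ≤ φ (-s))

/-- A set `A ⊆ ℝⁿ` is weakly unconditional. -/
def WeaklyUnconditional {n : ℕ} (A : Set (Fin n → ℝ)) : Prop :=
  ∀ x ∈ A, ∀ ε : Fin n → ℝ, (∀ i, ε i = 0 ∨ ε i = 1) → (fun i => ε i * x i) ∈ A

/-- A nonnegative function on a real vector space is `p`-concave. -/
def PConcaveFn {E : Type*} [AddCommGroup E] [Module ℝ E] (p : EReal) (φ : E → ℝ) : Prop :=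
  ∀ x y : E, ∀ lam : ℝ, lam ∈ Ioo (0:ℝ) 1 →
    MpR p lam (φ x) (φ y) ≤ φ ((1 - lam) • x + lam • y)

/-- A function on a real vector space is radially decreasing. -/
def RadiallyDecreasing {E : Type*} [AddCommGroup E] [Module ℝ E] (φ : E → ℝ) : Prop :=
  ∀ x : E, ∀ t : ℝ, t ∈ Icc (0:ℝ) 1 → φ x ≤ φ (t • x)


/-- if `Y` satisfies `BBL(p,m₂)` and `X` satisfies `BBL(q,m₁)` with
`q = p/(m₂p+1)`, then `X × Y` satisfies `BBL(p, m₁+m₂)`. -/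
theorem statement9 {X Y : Type*} [MetricSpace X] [MetricSpace Y]
    [MeasurableSpace X] [OpensMeasurableSpace X] [MeasurableSpace Y] [OpensMeasurableSpace Y]
    (μX : Measure X) (μY : Measure Y) [SigmaFinite μX] [SigmaFinite μY]
    (hdX : StrictlyIntrinsicDist (dist : X → X → ℝ))
    (hdY : StrictlyIntrinsicDist (dist : Y → Y → ℝ))
    (m₁ m₂ p : ℝ) (hm₁ : 0 < m₁) (hm₂ : 0 < m₂) (hp : -1/(m₁ + m₂) ≤ p)
    (hY : SatisfiesBBL (dist : Y → Y → ℝ) μY p m₂)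
    (hX : SatisfiesBBL (dist : X → X → ℝ) μX (p / (m₂ * p + 1)) m₁) :
    SatisfiesBBL (rho : X × Y → X × Y → ℝ) (μX.prod μY) p (m₁ + m₂) := by
  have hm : 0 < m₁ + m₂ := by positivity
  have h1 : 0 ≤ (m₁ + m₂) * p + 1 := by
    rw [div_le_iff₀ hm] at hp
    linarith
  have h2 : 0 < m₂ * p + 1 := by
    by_contra hc
    have hpneg : p < 0 := by
      by_contra hp0
      have := mul_nonneg hm₂.le (not_lt.mp hp0)
      linarith
    have := mul_neg_of_pos_of_neg hm₁ hpneg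
    nlinarith
  have h3 : m₁ * (p / (m₂ * p + 1)) + 1 = ((m₁ + m₂) * p + 1) / (m₂ * p + 1) := by
    rw [eq_div_iff h2.ne', add_mul, mul_assoc, div_mul_cancel₀ _ h2.ne']
    ring
  have h4 : (m₁ * (p / (m₂ * p + 1)) + 1 = 0) ↔ ((m₁ + m₂) * p + 1 = 0) := by
    rw [h3, div_eq_zero_iff]
    simp [h2.ne']
  have h5 : (p / (m₂ * p + 1)) / (m₁ * (p / (m₂ * p + 1)) + 1) = p / ((m₁ + m₂) * p + 1) := by
    rw [h3, div_div_div_cancel_right₀ h2.ne']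
  have key : ∀ (c : ℝ), 0 ≤ c → ∀ a b d e : ℝ, a = c * b → d = c * e →
      Real.sqrt (a ^ 2 + d ^ 2) = c * Real.sqrt (b ^ 2 + e ^ 2) := by
    intro c hc a b d e ha hd
    rw [ha, hd, show (c * b) ^ 2 + (c * e) ^ 2 = c ^ 2 * (b ^ 2 + e ^ 2) by ring,
      Real.sqrt_mul (sq_nonneg c), Real.sqrt_sq hc]
  intro lam hlam f g h hf hg hh hfgh
  have hX' := hX lam hlam (fun x => ∫⁻ y, f (x, y) ∂μY) (fun x => ∫⁻ y, g (x, y) ∂μY)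
    (fun x => ∫⁻ y, h (x, y) ∂μY) hf.lintegral_prod_right' hg.lintegral_prod_right'
    hh.lintegral_prod_right' (by
      intro x y z hzx hzy
      have hY' := hY lam hlam (fun t => f (x, t)) (fun t => g (y, t)) (fun t => h (z, t))
        (hf.comp measurable_prodMk_left) (hg.comp measurable_prodMk_left)
        (hh.comp measurable_prodMk_left) (by
          intro x' y' z' hzx' hzy'
          exact hfgh (x, x') (y, y') (z, z')
            (key lam hlam.1.le _ _ _ _ hzx hzx')
            (key (1 - lam) (by linarith [hlam.2]) _ _ _ _ hzy hzy'))
      rw [if_neg h2.ne'] at hY'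
      exact hY')
  rw [lintegral_prod f hf.aemeasurable, lintegral_prod g hg.aemeasurable,
    lintegral_prod h hh.aemeasurable]
  rw [h5] at hX'
  simp only [h4] at hX'
  exact hX'


end
end

section
/- Let n be a positive integer, m>0 and p ≥ −1/(nm). If a metric measure space (X,d_X,μ_X) with σ-finite measure satisfies BBL(p/(rmp+1),m) for every r=0,1,…,n−1, then the n-fold product (Xⁿ,ρₙ,μ_{Xⁿ}) (with the product metric and the completion of the n-fold product measure) satisfies BBL(p,mn). -/
open MeasureTheory Set Metric Filter
open scoped ENNReal NNReal Topology Pointwise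

noncomputable section

/-- Integration over the `(n+1)`-fold power by splitting off the first coordinate. -/
lemma lintegral_pi_cons {X : Type*} [MeasurableSpace X] (μ : Measure X) [SigmaFinite μ] (n : ℕ)
    (f : (Fin (n+1) → X) → ℝ≥0∞) (hf : Measurable f) :
    Measurable (fun x : Fin n → X => ∫⁻ t, f (Fin.cons t x) ∂μ) ∧
    ∫⁻ x, f x ∂(Measure.pi fun _ : Fin (n+1) => μ) =
      ∫⁻ x, ∫⁻ t, f (Fin.cons t x) ∂μ ∂(Measure.pi fun _ : Fin n => μ) := by
  have hmp := (measurePreserving_piFinSuccAbove (fun _ : Fin (n+1) => μ) 0).symm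
  set e := MeasurableEquiv.piFinSuccAbove (fun _ : Fin (n+1) => X) 0 with he
  have hes : ∀ t x, e.symm (t, x) = (Fin.cons t x : Fin (n+1) → X) := by
    intro t x
    simp [he, MeasurableEquiv.piFinSuccAbove, Fin.insertNthEquiv]
    try rfl
  have hfe : Measurable (fun z : X × (Fin n → X) => f (e.symm z)) := hf.comp e.symm.measurable
  constructor
  · have := hfe.lintegral_prod_left' (μ := μ)
    simpa only [hes] using this
  · rw [← hmp.lintegral_comp hf, lintegral_prod_symm _ hfe.aemeasurable]
    simp only [hes]

lemma rhoPi_cons {X : Type*} [MetricSpace X] {n : ℕ} {c : ℝ} (hc : 0 ≤ c) (a b a' b' : X)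
    (x y x' y' : Fin n → X)
    (h1 : dist a b = c * dist a' b') (h2 : rhoPi x y = c * rhoPi x' y') :
    rhoPi (Fin.cons a x : Fin (n+1) → X) (Fin.cons b y) =
      c * rhoPi (Fin.cons a' x' : Fin (n+1) → X) (Fin.cons b' y') := by
  unfold rhoPi at *
  have h3 : ∑ i, dist (x i) (y i) ^ 2 = c ^ 2 * ∑ i, dist (x' i) (y' i) ^ 2 := by
    have := congrArg (· ^ 2) h2
    simp only [mul_pow] at this
    rwa [Real.sq_sqrt (by positivity), Real.sq_sqrt (by positivity)] at this
  rw [Fin.sum_univ_succ, Fin.sum_univ_succ]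
  simp only [Fin.cons_zero, Fin.cons_succ]
  rw [h3, h1, show (c * dist a' b') ^ 2 + c ^ 2 * ∑ i, dist (x' i) (y' i) ^ 2
    = c ^ 2 * (dist a' b' ^ 2 + ∑ i, dist (x' i) (y' i) ^ 2) by ring,
    Real.sqrt_mul (by positivity), Real.sqrt_sq hc]

lemma bbl_pi {X : Type*} [MetricSpace X] [MeasurableSpace X]
    (μ : Measure X) [SigmaFinite μ] (m : ℝ) (hm : 0 < m) (n : ℕ) :
    ∀ p : ℝ, 0 ≤ ((n : ℝ) + 1) * m * p + 1 →
    (∀ r : ℕ, r < n + 1 →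
      SatisfiesBBL (dist : X → X → ℝ) μ (p / ((r : ℝ) * m * p + 1)) m) →
    SatisfiesBBL (rhoPi : (Fin (n+1) → X) → (Fin (n+1) → X) → ℝ)
      (Measure.pi fun _ : Fin (n+1) => μ) p (m * ((n : ℝ) + 1)) := by
  induction n with
  | zero =>
    intro p _ hX lam hlam f g h hf hg hh H
    have h0 := hX 0 (by norm_num)
    simp only [Nat.cast_zero, zero_mul, zero_add, div_one, mul_one] at h0 ⊢
    rw [(lintegral_pi_cons μ 0 f hf).2, (lintegral_pi_cons μ 0 g hg).2,
      (lintegral_pi_cons μ 0 h hh).2]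
    have hE : ∀ F : (Fin 0 → X) → ℝ≥0∞,
        ∫⁻ x, F x ∂(Measure.pi fun _ : Fin 0 => μ) = F isEmptyElim := by
      intro F
      rw [Measure.pi_of_empty (fun _ : Fin 0 => μ) isEmptyElim]
      exact lintegral_dirac' _ (Subsingleton.measurable)
    rw [hE, hE, hE]
    have hc : ∀ y : Fin 0 → X, Measurable (fun t : X => (Fin.cons t y : Fin 1 → X)) := by
      intro y
      refine measurable_pi_iff.2 fun i => ?_
      refine Fin.cases ?_ (fun j => j.elim0) i
      simpa using measurable_id'
    refine h0 lam hlam _ _ _ (hf.comp (hc _)) (hg.comp (hc _)) (hh.comp (hc _)) ?_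
    intro x y z h1 h2
    refine H _ _ _ (rhoPi_cons hlam.1.le _ _ _ _ _ _ _ _ h1 ?_)
      (rhoPi_cons (by linarith [hlam.2]) _ _ _ _ _ _ _ _ h2 ?_) <;> simp [rhoPi]
  | succ n ih =>
    intro p hp hX lam hlam f g h hf hg hh H
    push_cast at hp ⊢
    have hk : 0 < m * p + 1 := by
      by_contra hk
      have hn : (0 : ℝ) ≤ n := Nat.cast_nonneg n
      nlinarith
    have hid : ∀ s : ℝ, s * m * (p / (m * p + 1)) + 1 = ((s + 1) * m * p + 1) / (m * p + 1) := by
      intro s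
      field_simp
      ring
    have h0 := hX 0 (by norm_num)
    simp only [Nat.cast_zero, zero_mul, zero_add, div_one] at h0
    have hq := ih (p / (m * p + 1)) (by rw [hid]; positivity) (by
      intro r hr
      have := hX (r + 1) (by omega)
      rw [hid, div_div_div_cancel_right₀ hk.ne']
      push_cast at this
      exact this)
    rw [(lintegral_pi_cons μ _ f hf).2, (lintegral_pi_cons μ _ g hg).2,
      (lintegral_pi_cons μ _ h hh).2]
    have key := hq lam hlam _ _ _ (lintegral_pi_cons μ _ f hf).1 (lintegral_pi_cons μ _ g hg).1
      (lintegral_pi_cons μ _ h hh).1 (by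
        intro x y z h1 h2
        have hc : ∀ y : Fin (n+1) → X,
            Measurable (fun t : X => (Fin.cons t y : Fin (n+1+1) → X)) := by
          intro y
          refine measurable_pi_iff.2 fun i => ?_
          refine Fin.cases ?_ (fun j => ?_) i
          · simpa using measurable_id'
          · simp
        have := h0 lam hlam _ _ _ (hf.comp (hc x)) (hg.comp (hc y)) (hh.comp (hc z)) (by
          intro a b c h3 h4
          exact H _ _ _ (rhoPi_cons hlam.1.le _ _ _ _ _ _ _ _ h3 h1)
            (rhoPi_cons (by linarith [hlam.2]) _ _ _ _ _ _ _ _ h4 h2))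
        rw [if_neg hk.ne'] at this
        exact this)
    have e1 : m * ((n : ℝ) + 1) * (p / (m * p + 1)) + 1
        = (m * ((n : ℝ) + 1 + 1) * p + 1) / (m * p + 1) := by
      rw [mul_comm m (_ + 1), hid, mul_comm m (_ + 1 + 1)]
    rw [e1, div_div_div_cancel_right₀ hk.ne'] at key
    simp only [div_eq_zero_iff, hk.ne', or_false] at key
    exact key

/-- Corollary `c:ndimBBL`: if `X` satisfies `BBL(p/(rmp+1), m)` for all
`r = 0, 1, …, n-1`, then the `n`-fold product `Xⁿ` (with the ℓ² product metric and the
product measure) satisfies `BBL(p, mn)`. -/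
theorem statement10 {X : Type*} [MetricSpace X] [MeasurableSpace X] [OpensMeasurableSpace X]
    (μ : Measure X) [SigmaFinite μ]
    (hd : StrictlyIntrinsicDist (dist : X → X → ℝ))
    (n : ℕ) (hn : 0 < n) (m p : ℝ) (hm : 0 < m) (hp : -1/(n * m) ≤ p)
    (hX : ∀ r : ℕ, r < n → SatisfiesBBL (dist : X → X → ℝ) μ (p / ((r : ℝ) * m * p + 1)) m) :
    SatisfiesBBL (rhoPi : (Fin n → X) → (Fin n → X) → ℝ)
      (Measure.pi fun _ : Fin n => μ) p (m * n) := by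
  obtain ⟨k, rfl⟩ : ∃ k, n = k + 1 := ⟨n - 1, by omega⟩
  have h1 : 0 ≤ ((k : ℝ) + 1) * m * p + 1 := by
    push_cast at hp
    rw [div_le_iff₀ (by positivity)] at hp
    linarith
  have := bbl_pi μ m hm k p h1 hX
  push_cast
  exact this

end
end

section
/- Let (X,d_X,μ_X) and (Y,d_Y,μ_Y) be metric measure spaces with σ-finite measures which both satisfy PL. Then (X×Y,ρ,μ_{X×Y}) also satisfies PL. -/
open MeasureTheory Set Metric Filter
open scoped ENNReal NNReal Topology Pointwise

noncomputable section

/-- the product of two metric measure spaces satisfying the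
Prékopa–Leindler inequality also satisfies it. -/
theorem statement11 {X Y : Type*} [MetricSpace X] [MetricSpace Y]
    [MeasurableSpace X] [OpensMeasurableSpace X] [MeasurableSpace Y] [OpensMeasurableSpace Y]
    (μX : Measure X) (μY : Measure Y) [SigmaFinite μX] [SigmaFinite μY]
    (hdX : StrictlyIntrinsicDist (dist : X → X → ℝ))
    (hdY : StrictlyIntrinsicDist (dist : Y → Y → ℝ))
    (hX : SatisfiesPL (dist : X → X → ℝ) μX)
    (hY : SatisfiesPL (dist : Y → Y → ℝ) μY) :
    SatisfiesPL (rho : X × Y → X × Y → ℝ) (μX.prod μY) := by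
  intro lam hl f g h hf hg hh H
  have key : ∀ a c a' c' : ℝ, ∀ t : ℝ, 0 ≤ t → c = t * a → c' = t * a' →
      Real.sqrt (c ^ 2 + c' ^ 2) = t * Real.sqrt (a ^ 2 + a' ^ 2) := by
    intro a c a' c' t ht h1 h2
    rw [h1, h2, show (t * a) ^ 2 + (t * a') ^ 2 = t ^ 2 * (a ^ 2 + a' ^ 2) by ring,
      Real.sqrt_mul (sq_nonneg t), Real.sqrt_sq ht]
  rw [lintegral_prod _ hf.aemeasurable, lintegral_prod _ hg.aemeasurable,
    lintegral_prod _ hh.aemeasurable]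
  refine hX lam hl _ _ _ hf.lintegral_prod_right' hg.lintegral_prod_right'
    hh.lintegral_prod_right' ?_
  intro x y z h1 h2
  refine hY lam hl _ _ _ (hf.comp measurable_prodMk_left) (hg.comp measurable_prodMk_left)
    (hh.comp measurable_prodMk_left) ?_
  intro x' y' z' h1' h2'
  refine H (x, x') (y, y') (z, z') ?_ ?_
  · exact key _ _ _ _ _ hl.1.le h1 h1'
  · exact key _ _ _ _ _ (by linarith [hl.2]) h2 h2'

end
end

section
/- Let μ = μ₁×⋯×μₙ be a product measure on ℝⁿ where each μᵢ is given by dμᵢ(x) = φᵢ(x)dx with φᵢ:ℝ→[0,∞) positively decreasing. Let A,B⊆ℝⁿ be non-empty weakly unconditional convex sets. Then the functions t ↦ μ(A+tB)^{1/n} and t ↦ μ(tA)^{1/n} are concave on [0,∞). -/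
open MeasureTheory Set Metric Filter
open scoped ENNReal NNReal Topology Pointwise

noncomputable section

/-! ### One-dimensional inequality -/

lemma aux_concave (φ : ℝ → ℝ) (hφ : AntitoneOn φ (Ici 0)) (lam : ℝ) (h0 : 0 ≤ lam) (h1 : lam ≤ 1)
    (a b : ℝ) (ha : 0 ≤ a) (hab : a ≤ b) :
    (1 - lam) * (∫ x in (0:ℝ)..a, φ x) + lam * (∫ x in (0:ℝ)..b, φ x)
      ≤ ∫ x in (0:ℝ)..((1 - lam) * a + lam * b), φ x := by
  have hint : ∀ u v : ℝ, 0 ≤ u → 0 ≤ v → IntervalIntegrable φ volume u v := by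
    intro u v hu hv
    apply AntitoneOn.intervalIntegrable
    apply hφ.mono
    intro x hx
    rw [mem_uIcc] at hx
    simp only [mem_Ici]
    rcases hx with hx | hx <;> linarith [hx.1]
  have hb : 0 ≤ b := ha.trans hab
  have hc : 0 ≤ (1 - lam) * a + lam * b := by nlinarith
  have e1 : (∫ x in (0:ℝ)..a, φ x) + (∫ x in a..b, φ x) = ∫ x in (0:ℝ)..b, φ x :=
    intervalIntegral.integral_add_adjacent_intervals (hint _ _ le_rfl ha) (hint _ _ ha hb)
  have e2 : (∫ x in (0:ℝ)..a, φ x) + (∫ x in a..((1 - lam) * a + lam * b), φ x)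
      = ∫ x in (0:ℝ)..((1 - lam) * a + lam * b), φ x :=
    intervalIntegral.integral_add_adjacent_intervals (hint _ _ le_rfl ha) (hint _ _ ha hc)
  have e3 : lam * (∫ x in a..b, φ ((1 - lam) * a + lam * x))
      = ∫ x in a..((1 - lam) * a + lam * b), φ x := by
    rw [intervalIntegral.mul_integral_comp_add_mul]
    congr 1
    ring
  have e4 : (∫ x in a..b, φ x) ≤ ∫ x in a..b, φ ((1 - lam) * a + lam * x) := by
    apply intervalIntegral.integral_mono_on hab (hint _ _ ha hb)
    · apply AntitoneOn.intervalIntegrable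
      rw [uIcc_of_le hab]
      intro x hx y hy hxy
      apply hφ
      · simp only [mem_Ici]; nlinarith [hx.1]
      · simp only [mem_Ici]; nlinarith [hy.1]
      · nlinarith
    · intro x hx
      apply hφ
      · simp only [mem_Ici]; nlinarith [hx.1]
      · simp only [mem_Ici]; linarith [hx.1]
      · nlinarith [hx.1]
  have e5 := mul_le_mul_of_nonneg_left e4 h0
  rw [e3] at e5
  rw [← e1, ← e2]
  nlinarith

lemma aux_concave' (φ : ℝ → ℝ) (hφ : AntitoneOn φ (Ici 0)) (lam : ℝ) (h0 : 0 ≤ lam) (h1 : lam ≤ 1)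
    (a b : ℝ) (ha : 0 ≤ a) (hb : 0 ≤ b) :
    (1 - lam) * (∫ x in (0:ℝ)..a, φ x) + lam * (∫ x in (0:ℝ)..b, φ x)
      ≤ ∫ x in (0:ℝ)..((1 - lam) * a + lam * b), φ x := by
  rcases le_total a b with h | h
  · exact aux_concave φ hφ lam h0 h1 a b ha h
  · have := aux_concave φ hφ (1 - lam) (by linarith) (by linarith) b a hb h
    have e : (1 - (1 - lam)) * b + (1 - lam) * a = (1 - lam) * a + lam * b := by ring
    rw [e] at this
    linarith

lemma aux_meas (φ : ℝ → ℝ) (h0 : ∀ x, 0 ≤ φ x) (hφ : AntitoneOn φ (Ici 0)) (a : ℝ) (ha : 0 ≤ a) :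
    (∫⁻ x in Ioc 0 a, ENNReal.ofReal (φ x)) = ENNReal.ofReal (∫ x in (0:ℝ)..a, φ x) := by
  rw [intervalIntegral.integral_of_le ha, ofReal_integral_eq_lintegral_ofReal]
  · have : IntervalIntegrable φ volume 0 a := by
      apply AntitoneOn.intervalIntegrable
      apply hφ.mono
      rw [uIcc_of_le ha]
      intro x hx
      exact hx.1
    exact this.1
  · exact Filter.Eventually.of_forall h0

lemma aux_half (φ : ℝ → ℝ) (h0 : ∀ x, 0 ≤ φ x) (hφ : AntitoneOn φ (Ici 0))
    (lam : ℝ) (hl : lam ∈ Ioo (0:ℝ) 1) (a b : ℝ) (ha : 0 ≤ a) (hb : 0 ≤ b) :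
    ENNReal.ofReal (1 - lam) * (∫⁻ x in Ioc 0 a, ENNReal.ofReal (φ x))
     + ENNReal.ofReal lam * (∫⁻ x in Ioc 0 b, ENNReal.ofReal (φ x))
     ≤ ∫⁻ x in Ioc 0 ((1 - lam) * a + lam * b), ENNReal.ofReal (φ x) := by
  have h1 : 0 ≤ 1 - lam := by linarith [hl.2]
  have h2 := hl.1.le
  rw [aux_meas φ h0 hφ a ha, aux_meas φ h0 hφ b hb, aux_meas φ h0 hφ _ (by positivity),
    ← ENNReal.ofReal_mul h1, ← ENNReal.ofReal_mul h2, ← ENNReal.ofReal_add]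
  · exact ENNReal.ofReal_le_ofReal (aux_concave' φ hφ lam h2 hl.2.le a b ha hb)
  · exact mul_nonneg h1 (intervalIntegral.integral_nonneg ha fun x _ => h0 x)
  · exact mul_nonneg h2 (intervalIntegral.integral_nonneg hb fun x _ => h0 x)

def Star1 (I : Set ℝ) : Prop := ∀ x ∈ I, ∀ t ∈ Icc (0:ℝ) 1, t * x ∈ I

lemma aux_end (I : Set ℝ) (hI : Star1 I) (h0 : (0:ℝ) ∈ I) (R : ℝ) (hR : 0 ≤ R) :
    ∃ a : ℝ, 0 ≤ a ∧ (∀ x ∈ I, 0 ≤ x → x ≤ R → x ≤ a) ∧ ∀ x, 0 ≤ x → x < a → x ∈ I := by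
  have hbdd : BddAbove (I ∩ Icc 0 R) := ⟨R, fun x hx => hx.2.2⟩
  have hmem : (0:ℝ) ∈ I ∩ Icc 0 R := ⟨h0, le_rfl, hR⟩
  refine ⟨sSup (I ∩ Icc 0 R), le_csSup hbdd hmem, fun x hx hx0 hxR => le_csSup hbdd ⟨hx, hx0, hxR⟩, ?_⟩
  intro x hx hxa
  obtain ⟨y, hy, hxy⟩ := exists_lt_of_lt_csSup ⟨_, hmem⟩ hxa
  have hy0 : 0 < y := lt_of_le_of_lt hx hxy
  have := hI y hy.1 (x / y) ⟨by positivity, by rw [div_le_one hy0]; exact hxy.le⟩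
  rwa [div_mul_cancel₀ _ hy0.ne'] at this

lemma aux_end_comb (I J C : Set ℝ) (h0I : (0:ℝ) ∈ I) (h0J : (0:ℝ) ∈ J)
    (lam : ℝ) (hl : lam ∈ Ioo (0:ℝ) 1)
    (hC : ∀ x ∈ I, ∀ y ∈ J, (1 - lam) * x + lam * y ∈ C) (a b : ℝ) (ha : 0 ≤ a) (hb : 0 ≤ b)
    (haI : ∀ x, 0 ≤ x → x < a → x ∈ I) (hbJ : ∀ x, 0 ≤ x → x < b → x ∈ J) :
    Ioo 0 ((1 - lam) * a + lam * b) ⊆ C := by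
  intro z hz
  have hc : 0 < (1 - lam) * a + lam * b := hz.1.trans hz.2
  set c := (1 - lam) * a + lam * b with hcdef
  have hs0 : 0 ≤ z / c := div_nonneg hz.1.le hc.le
  have hs1 : z / c < 1 := by rw [div_lt_one hc]; exact hz.2
  have key : ∀ (S : Set ℝ) (d : ℝ), (0:ℝ) ∈ S → 0 ≤ d → (∀ x, 0 ≤ x → x < d → x ∈ S) → z / c * d ∈ S := by
    intro S d hS hd h
    rcases hd.eq_or_lt with rfl | hd'
    · simpa using hS
    · exact h _ (by positivity) (by nlinarith)
  have := hC _ (key I a h0I ha haI) _ (key J b h0J hb hbJ)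
  have e : (1 - lam) * (z / c * a) + lam * (z / c * b) = z := by
    have : (1 - lam) * (z / c * a) + lam * (z / c * b) = z / c * c := by rw [hcdef]; ring
    rw [this, div_mul_cancel₀ _ hc.ne']
  rwa [e] at this

/-- the one-dimensional linear inequality, as a property of the measure -/
def BMOne (ν : Measure ℝ) (lam : ℝ) : Prop :=
  ∀ I J C : Set ℝ, Star1 I → Star1 J → (0:ℝ) ∈ I → (0:ℝ) ∈ J →
    MeasurableSet I → MeasurableSet J → MeasurableSet C →
    (∀ x ∈ I, ∀ y ∈ J, (1 - lam) * x + lam * y ∈ C) →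
    ENNReal.ofReal (1 - lam) * ν I + ENNReal.ofReal lam * ν J ≤ ν C

lemma aux_neg (f : ℝ → ℝ≥0∞) (a : ℝ) :
    ∫⁻ x in Ico (-a) 0, f x = ∫⁻ x in Ioc 0 a, f (-x) := by
  have := (Measure.measurePreserving_neg (volume : Measure ℝ)).setLIntegral_comp_emb
    (MeasurableEquiv.neg ℝ).measurableEmbedding f (Ioc 0 a)
  rw [this]
  congr 2
  ext x
  simp

lemma bmOne (φ : ℝ → ℝ) (hm : Measurable φ) (h0 : ∀ x, 0 ≤ φ x) (hd : PositivelyDecreasing φ)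
    (R : ℝ) (hR : 0 ≤ R) (hs : ∀ x, R < |x| → φ x = 0) (lam : ℝ) (hl : lam ∈ Ioo (0:ℝ) 1) :
    BMOne ((volume : Measure ℝ).withDensity fun x => ENNReal.ofReal (φ x)) lam := by
  intro I J C hI hJ h0I h0J mI mJ mC hC
  have hp : AntitoneOn φ (Ici 0) := fun x hx y hy hxy => hd.1 x y hx hxy
  have hn : AntitoneOn (fun x => φ (-x)) (Ici 0) := fun x hx y hy hxy => hd.2 x y hx hxy
  have negStar : ∀ S, Star1 S → Star1 (-S) := by
    intro S hS x hx t ht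
    have := hS (-x) hx t ht
    simpa using this
  obtain ⟨a, ha, ha1, ha2⟩ := aux_end I hI h0I R hR
  obtain ⟨b, hb, hb1, hb2⟩ := aux_end J hJ h0J R hR
  obtain ⟨a', ha', ha1', ha2'⟩ := aux_end (-I) (negStar I hI) (by simpa using h0I) R hR
  obtain ⟨b', hb', hb1', hb2'⟩ := aux_end (-J) (negStar J hJ) (by simpa using h0J) R hR
  have hc := aux_end_comb I J C h0I h0J lam hl hC a b ha hb ha2 hb2
  have hc' := aux_end_comb (-I) (-J) (-C) (by simpa using h0I) (by simpa using h0J) lam hl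
    (by
      intro x hx y hy
      have := hC _ hx _ hy
      simp only [Set.mem_neg]
      convert this using 1
      ring) a' b' ha' hb' ha2' hb2'
  set c := (1 - lam) * a + lam * b
  set c' := (1 - lam) * a' + lam * b'
  set F : ℝ → ℝ≥0∞ := fun x => ENNReal.ofReal (φ x) with hF
  have upper : ∀ (S : Set ℝ) (d d' : ℝ), MeasurableSet S →
      (∀ x ∈ S, 0 ≤ x → x ≤ R → x ≤ d) → (∀ x ∈ -S, 0 ≤ x → x ≤ R → x ≤ d') →
      volume.withDensity F S ≤ (∫⁻ x in Ioc 0 d, F x) + ∫⁻ x in Ioc 0 d', F (-x) := by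
    intro S d d' mS h h'
    rw [withDensity_apply _ mS, ← aux_neg F d', ← lintegral_indicator mS,
      ← lintegral_indicator measurableSet_Ioc, ← lintegral_indicator measurableSet_Ico]
    have mF : Measurable F := hm.ennreal_ofReal
    rw [← lintegral_add_left (mF.indicator measurableSet_Ioc)]
    apply lintegral_mono_ae
    have : ∀ᵐ x : ℝ, x ≠ 0 := by simp [ae_iff]
    filter_upwards [this] with x hx
    by_cases hxS : x ∈ S
    · by_cases hxR : R < |x|
      · simp [indicator, hF, hs x hxR]
      · push Not at hxR
        rcases lt_or_gt_of_ne hx with hneg | hpos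
        · have : x ∈ Ico (-d') 0 := by
            have := h' (-x) (by simpa using hxS) (by linarith) (by rwa [abs_of_neg hneg] at hxR)
            exact ⟨by linarith, hneg⟩
          rw [indicator_of_mem hxS, indicator_of_mem this]
          exact le_add_self
        · have : x ∈ Ioc 0 d := ⟨hpos, h x hxS hpos.le (by rwa [abs_of_pos hpos] at hxR)⟩
          rw [indicator_of_mem hxS, indicator_of_mem this]
          exact le_self_add
    · simp [indicator_of_notMem hxS]
  have lower : (∫⁻ x in Ioc 0 c, F x) + ∫⁻ x in Ioc 0 c', F (-x) ≤ volume.withDensity F C := by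
    rw [← aux_neg F c', withDensity_apply _ mC, setLIntegral_congr Ioo_ae_eq_Ioc.symm,
      setLIntegral_congr Ioo_ae_eq_Ico.symm, ← lintegral_union measurableSet_Ioo]
    · apply lintegral_mono_set
      apply union_subset hc
      intro x hx
      have := @hc' (-x) ⟨by linarith [hx.2], by linarith [hx.1]⟩
      simpa using this
    · rw [Set.disjoint_left]
      intro x hx hx'
      linarith [hx.1, hx'.2]
  calc _ ≤ ENNReal.ofReal (1 - lam) * ((∫⁻ x in Ioc 0 a, F x) + ∫⁻ x in Ioc 0 a', F (-x))
        + ENNReal.ofReal lam * ((∫⁻ x in Ioc 0 b, F x) + ∫⁻ x in Ioc 0 b', F (-x)) := by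
        gcongr
        · exact upper I a a' mI ha1 ha1'
        · exact upper J b b' mJ hb1 hb1'
    _ = (ENNReal.ofReal (1 - lam) * (∫⁻ x in Ioc 0 a, F x)
          + ENNReal.ofReal lam * (∫⁻ x in Ioc 0 b, F x))
        + (ENNReal.ofReal (1 - lam) * (∫⁻ x in Ioc 0 a', F (-x))
          + ENNReal.ofReal lam * (∫⁻ x in Ioc 0 b', F (-x))) := by ring
    _ ≤ (∫⁻ x in Ioc 0 c, F x) + ∫⁻ x in Ioc 0 c', F (-x) := by
        gcongr
        · exact aux_half φ h0 hp lam hl a b ha hb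
        · exact aux_half (fun x => φ (-x)) (fun x => h0 _) hn lam hl a' b' ha' hb'
    _ ≤ _ := lower

/-! ### The functional inequality -/

lemma layer (ν : Measure ℝ) (lam θ : ℝ) (hl : lam ∈ Ioo (0:ℝ) 1) (hθ : θ ∈ Ioo (0:ℝ) 1)
    (hν : BMOne ν lam) (F G H : ℝ → ℝ) (mF : Measurable F) (mG : Measurable G) (mH : Measurable H)
    (F0 : ∀ x, 0 ≤ F x) (G0 : ∀ x, 0 ≤ G x) (H0 : ∀ x, 0 ≤ H x)
    (F1 : F 0 = 1) (G1 : G 0 = 1)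
    (dF : ∀ x, ∀ t ∈ Icc (0:ℝ) 1, F x ≤ F (t * x)) (dG : ∀ x, ∀ t ∈ Icc (0:ℝ) 1, G x ≤ G (t * x))
    (h : ∀ x y, F x ^ (1 - θ) * G y ^ θ ≤ H ((1 - lam) * x + lam * y)) :
    ENNReal.ofReal (1 - lam) * (∫⁻ x, ENNReal.ofReal (F x) ∂ν)
      + ENNReal.ofReal lam * (∫⁻ x, ENNReal.ofReal (G x) ∂ν) ≤ ∫⁻ x, ENNReal.ofReal (H x) ∂ν := by
  rw [lintegral_eq_lintegral_meas_lt ν (Eventually.of_forall F0) mF.aemeasurable,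
    lintegral_eq_lintegral_meas_lt ν (Eventually.of_forall G0) mG.aemeasurable,
    lintegral_eq_lintegral_meas_lt ν (Eventually.of_forall H0) mH.aemeasurable,
    ← lintegral_const_mul' _ _ ENNReal.ofReal_ne_top,
    ← lintegral_const_mul' _ _ ENNReal.ofReal_ne_top, ← lintegral_add_left]
  · apply setLIntegral_mono' measurableSet_Ioi
    intro t ht
    simp only [mem_Ioi] at ht
    by_cases ht1 : t < 1
    · apply hν
      · intro x hx s hs; exact lt_of_lt_of_le hx (dF x s hs)
      · intro x hx s hs; exact lt_of_lt_of_le hx (dG x s hs)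
      · simpa [F1] using ht1
      · simpa [G1] using ht1
      · exact measurableSet_lt measurable_const mF
      · exact measurableSet_lt measurable_const mG
      · exact measurableSet_lt measurable_const mH
      · intro x hx y hy
        simp only [mem_setOf_eq] at hx hy ⊢
        refine lt_of_lt_of_le ?_ (h x y)
        calc t = t ^ (1 - θ) * t ^ θ := by
                rw [← Real.rpow_add ht]; simp
          _ < F x ^ (1 - θ) * G y ^ θ := by
                apply mul_lt_mul''
                · exact Real.rpow_lt_rpow ht.le hx (by linarith [hθ.2])
                · exact Real.rpow_lt_rpow ht.le hy hθ.1
                · positivity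
                · positivity
    · push Not at ht1
      have e1 : {a | t < F a} = ∅ := by
        ext x
        have := dF x 0 (by simp)
        simp only [zero_mul, F1] at this
        simp; linarith
      have e2 : {a | t < G a} = ∅ := by
        ext x
        have := dG x 0 (by simp)
        simp only [zero_mul, G1] at this
        simp; linarith
      simp [e1, e2]
  · apply Measurable.const_mul
    apply Antitone.measurable
    intro s t hst
    apply measure_mono
    intro x hx
    exact lt_of_le_of_lt hst hx

/-- one-dimensional functional inequality with constant -/
lemma func1 (ν : Measure ℝ) (lam θ : ℝ) (hl : lam ∈ Ioo (0:ℝ) 1) (hθ : θ ∈ Ioo (0:ℝ) 1)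
    (hν : BMOne ν lam) (K c : ℝ≥0∞) (hc : c ≠ ∞)
    (hK : ∀ X Y : ℝ≥0∞, K * (X ^ (1 - θ) * Y ^ θ) ≤ ENNReal.ofReal (1 - lam) * X + ENNReal.ofReal lam * Y)
    (f g h : ℝ → ℝ≥0∞) (mf : Measurable f) (mg : Measurable g) (mh : Measurable h)
    (f0 : f 0 ≠ ∞) (g0 : g 0 ≠ ∞)
    (df : ∀ x, ∀ t ∈ Icc (0:ℝ) 1, f x ≤ f (t * x)) (dg : ∀ x, ∀ t ∈ Icc (0:ℝ) 1, g x ≤ g (t * x))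
    (hh : ∀ x y, c * (f x ^ (1 - θ) * g y ^ θ) ≤ h ((1 - lam) * x + lam * y)) :
    c * K * ((∫⁻ x, f x ∂ν) ^ (1 - θ) * (∫⁻ x, g x ∂ν) ^ θ) ≤ ∫⁻ x, h x ∂ν := by
  have t1 : 0 < 1 - θ := by linarith [hθ.2]
  have t0 := hθ.1
  have fle : ∀ x, f x ≤ f 0 := fun x => by simpa using df x 0 (by simp)
  have gle : ∀ x, g x ≤ g 0 := fun x => by simpa using dg x 0 (by simp)
  by_cases c0 : c = 0
  · simp [c0]
  by_cases fz : f 0 = 0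
  · have : ∀ x, f x = 0 := fun x => by simpa [fz] using fle x
    simp [this, t1]
  by_cases gz : g 0 = 0
  · have : ∀ x, g x = 0 := fun x => by simpa [gz] using gle x
    simp [this, t0]
  set M : ℝ≥0∞ := c * (f 0 ^ (1 - θ) * g 0 ^ θ) with hM
  have fp0 : f 0 ^ (1 - θ) ≠ 0 := by simp [fz, f0, ENNReal.rpow_eq_zero_iff]
  have gp0 : g 0 ^ θ ≠ 0 := by simp [gz, g0, ENNReal.rpow_eq_zero_iff]
  have fpt : f 0 ^ (1 - θ) ≠ ∞ := ENNReal.rpow_ne_top_of_nonneg t1.le f0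
  have gpt : g 0 ^ θ ≠ ∞ := ENNReal.rpow_ne_top_of_nonneg t0.le g0
  have M0 : M ≠ 0 := by simp [hM, c0, fp0, gp0]
  have Mt : M ≠ ∞ := ENNReal.mul_ne_top hc (ENNReal.mul_ne_top fpt gpt)
  have ftop : ∀ x, f x / f 0 ≠ ∞ := fun x =>
    (ENNReal.div_lt_top (ne_top_of_le_ne_top f0 (fle x)) fz).ne
  have gtop : ∀ x, g x / g 0 ≠ ∞ := fun x =>
    (ENNReal.div_lt_top (ne_top_of_le_ne_top g0 (gle x)) gz).ne
  have htop : ∀ x, min (h x / M) 1 ≠ ∞ := fun x => ne_top_of_le_ne_top ENNReal.one_ne_top (min_le_right _ _)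
  have key := layer ν lam θ hl hθ hν (fun x => (f x / f 0).toReal) (fun x => (g x / g 0).toReal)
    (fun x => (min (h x / M) 1).toReal) (mf.div_const _).ennreal_toReal (mg.div_const _).ennreal_toReal
    ((mh.div_const _).min measurable_const).ennreal_toReal
    (fun x => ENNReal.toReal_nonneg) (fun x => ENNReal.toReal_nonneg) (fun x => ENNReal.toReal_nonneg)
    (by simp [ENNReal.div_self fz f0]) (by simp [ENNReal.div_self gz g0])
    (fun x t ht => ENNReal.toReal_mono (ftop _) (ENNReal.div_le_div_right (df x t ht) _))
    (fun x t ht => ENNReal.toReal_mono (gtop _) (ENNReal.div_le_div_right (dg x t ht) _))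
    (by
      intro x y
      rw [ENNReal.toReal_rpow, ENNReal.toReal_rpow, ← ENNReal.toReal_mul]
      apply ENNReal.toReal_mono (htop _)
      apply le_min
      · rw [ENNReal.le_div_iff_mul_le (Or.inl M0) (Or.inl Mt)]
        refine le_trans (le_of_eq ?_) (hh x y)
        rw [ENNReal.div_rpow_of_nonneg _ _ t1.le, ENNReal.div_rpow_of_nonneg _ _ t0.le, hM]
        calc _ = c * ((f x ^ (1 - θ) / f 0 ^ (1 - θ) * f 0 ^ (1 - θ))
                * (g y ^ θ / g 0 ^ θ * g 0 ^ θ)) := by ring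
          _ = _ := by rw [ENNReal.div_mul_cancel fp0 fpt, ENNReal.div_mul_cancel gp0 gpt]
      · apply mul_le_one'
        · exact ENNReal.rpow_le_one (ENNReal.div_le_of_le_mul (by simpa using fle x)) t1.le
        · exact ENNReal.rpow_le_one (ENNReal.div_le_of_le_mul (by simpa using gle y)) t0.le)
  simp only [ENNReal.ofReal_toReal (ftop _), ENNReal.ofReal_toReal (gtop _),
    ENNReal.ofReal_toReal (htop _)] at key
  have ef : (∫⁻ x, f x ∂ν) = (∫⁻ x, f x / f 0 ∂ν) * f 0 := by
    rw [← lintegral_mul_const' _ _ f0]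
    simp only [ENNReal.div_mul_cancel fz f0]
  have eg : (∫⁻ x, g x ∂ν) = (∫⁻ x, g x / g 0 ∂ν) * g 0 := by
    rw [← lintegral_mul_const' _ _ g0]
    simp only [ENNReal.div_mul_cancel gz g0]
  have eh : (∫⁻ x, min (h x / M) 1 ∂ν) * M ≤ ∫⁻ x, h x ∂ν := by
    rw [← lintegral_mul_const' _ _ Mt]
    apply lintegral_mono
    intro x
    calc min (h x / M) 1 * M ≤ h x / M * M := by gcongr; exact min_le_left _ _
      _ = h x := ENNReal.div_mul_cancel M0 Mt
  refine le_trans ?_ eh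
  refine le_trans ?_ (mul_le_mul_left ((hK _ _).trans key) M)
  rw [ef, eg, ENNReal.mul_rpow_of_nonneg _ _ t1.le, ENNReal.mul_rpow_of_nonneg _ _ t0.le, hM]
  apply le_of_eq
  ring

lemma lint_succ {n : ℕ} (ν : Fin (n+1) → Measure ℝ) [∀ i, SigmaFinite (ν i)]
    (f : (Fin (n+1) → ℝ) → ℝ≥0∞) (mf : Measurable f) :
    ∫⁻ x, f x ∂(Measure.pi ν)
      = ∫⁻ t, ∫⁻ y, f (Fin.cons t y) ∂(Measure.pi fun i : Fin n => ν i.succ) ∂(ν 0) := by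
  have e := (measurePreserving_piFinSuccAbove ν 0).symm
  rw [← e.lintegral_comp mf, lintegral_prod]
  · simp [MeasurableEquiv.piFinSuccAbove, Fin.insertNthEquiv]
  · exact (mf.comp (MeasurableEquiv.measurable _)).aemeasurable

lemma meas_cons {n : ℕ} (f : (Fin (n+1) → ℝ) → ℝ≥0∞) (mf : Measurable f) :
    Measurable (fun p : ℝ × (Fin n → ℝ) => f (Fin.cons p.1 p.2)) := by
  apply mf.comp
  apply measurable_pi_lambda
  intro i
  refine Fin.cases ?_ (fun j => ?_) i
  · simpa using measurable_fst
  · simp only [Fin.cons_succ]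
    exact (measurable_pi_apply j).comp measurable_snd

def StarFn {n : ℕ} (f : (Fin n → ℝ) → ℝ≥0∞) : Prop :=
  ∀ x : Fin n → ℝ, ∀ ε : Fin n → ℝ, (∀ i, ε i ∈ Icc (0:ℝ) 1) → f x ≤ f (ε * x)

lemma funcN (lam θ : ℝ) (hl : lam ∈ Ioo (0:ℝ) 1) (hθ : θ ∈ Ioo (0:ℝ) 1) (K : ℝ≥0∞) (hKt : K ≠ ∞)
    (hK : ∀ X Y : ℝ≥0∞, K * (X ^ (1 - θ) * Y ^ θ) ≤ ENNReal.ofReal (1 - lam) * X + ENNReal.ofReal lam * Y) :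
    ∀ (n : ℕ) (ν : Fin n → Measure ℝ) [∀ i, IsFiniteMeasure (ν i)] (hν : ∀ i, BMOne (ν i) lam)
    (f g h : (Fin n → ℝ) → ℝ≥0∞) (mf : Measurable f) (mg : Measurable g) (mh : Measurable h)
    (f0 : f 0 ≠ ∞) (g0 : g 0 ≠ ∞) (df : StarFn f) (dg : StarFn g)
    (hh : ∀ x y, f x ^ (1 - θ) * g y ^ θ ≤ h ((1 - lam) • x + lam • y)),
    K ^ n * ((∫⁻ x, f x ∂(Measure.pi ν)) ^ (1 - θ) * (∫⁻ x, g x ∂(Measure.pi ν)) ^ θ)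
      ≤ ∫⁻ x, h x ∂(Measure.pi ν) := by
  intro n
  induction n with
  | zero =>
    intro ν _ hν f g h mf mg mh f0 g0 df dg hh
    rw [Measure.pi_of_empty ν 0, lintegral_dirac, lintegral_dirac, lintegral_dirac]
    simpa using hh 0 0
  | succ n ih =>
    intro ν _ hν f g h mf mg mh f0 g0 df dg hh
    rw [lint_succ ν f mf, lint_succ ν g mg, lint_succ ν h mh, pow_succ]
    have star : ∀ k : (Fin (n+1) → ℝ) → ℝ≥0∞, StarFn k → ∀ (x : ℝ) (y : Fin n → ℝ) (t : ℝ)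
        (ε : Fin n → ℝ), t ∈ Icc (0:ℝ) 1 → (∀ i, ε i ∈ Icc (0:ℝ) 1) →
        k (Fin.cons x y) ≤ k (Fin.cons (t * x) (ε * y)) := by
      intro k dk x y t ε ht hε
      refine (dk (Fin.cons x y) (Fin.cons t ε) (fun i => ?_)).trans (le_of_eq ?_)
      · refine Fin.cases ?_ (fun j => ?_) i
        · simpa using ht
        · simpa using hε j
      · congr 1
        ext i
        refine Fin.cases ?_ (fun j => ?_) i <;> simp
    have cons00 : (Fin.cons (0:ℝ) (0 : Fin n → ℝ) : Fin (n+1) → ℝ) = 0 := by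
      ext i
      refine Fin.cases ?_ (fun j => ?_) i <;> simp
    have le0 : ∀ k : (Fin (n+1) → ℝ) → ℝ≥0∞, StarFn k → ∀ x, k x ≤ k 0 := by
      intro k dk x
      simpa using dk x 0 (fun i => by simp)
    have dsec : ∀ k : (Fin (n+1) → ℝ) → ℝ≥0∞, StarFn k → ∀ x : ℝ,
        StarFn (fun y : Fin n → ℝ => k (Fin.cons x y)) := by
      intro k dk x y ε hε
      simpa using star k dk x y 1 ε (by simp) hε
    have dint : ∀ k : (Fin (n+1) → ℝ) → ℝ≥0∞, StarFn k → ∀ x : ℝ, ∀ t ∈ Icc (0:ℝ) 1,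
        (∫⁻ y, k (Fin.cons x y) ∂(Measure.pi fun i : Fin n => ν i.succ))
          ≤ ∫⁻ y, k (Fin.cons (t * x) y) ∂(Measure.pi fun i : Fin n => ν i.succ) := by
      intro k dk x t ht
      apply lintegral_mono
      intro y
      simpa using star k dk x y t 1 ht (fun i => by simp)
    have fin : ∀ k : (Fin (n+1) → ℝ) → ℝ≥0∞, StarFn k → k 0 ≠ ∞ →
        (∫⁻ y, k (Fin.cons 0 y) ∂(Measure.pi fun i : Fin n => ν i.succ)) ≠ ∞ := by
      intro k dk k0
      have : (∫⁻ y, k (Fin.cons 0 y) ∂(Measure.pi fun i : Fin n => ν i.succ))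
          ≤ ∫⁻ y, k 0 ∂(Measure.pi fun i : Fin n => ν i.succ) :=
        lintegral_mono fun y => le0 k dk _
      refine ne_top_of_le_ne_top ?_ this
      rw [lintegral_const]
      exact ENNReal.mul_ne_top k0 (measure_ne_top _ _)
    apply func1 (ν 0) lam θ hl hθ (hν 0) K (K ^ n) (ENNReal.pow_ne_top hKt) hK
    · exact (meas_cons f mf).lintegral_prod_right'
    · exact (meas_cons g mg).lintegral_prod_right'
    · exact (meas_cons h mh).lintegral_prod_right'
    · exact fin f df f0
    · exact fin g dg g0
    · exact dint f df
    · exact dint g dg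
    · intro x y
      apply ih (fun i => ν i.succ) (fun i => hν i.succ)
      · exact (meas_cons f mf).comp measurable_prodMk_left
      · exact (meas_cons g mg).comp measurable_prodMk_left
      · exact (meas_cons h mh).comp measurable_prodMk_left
      · exact ne_top_of_le_ne_top f0 (le0 f df _)
      · exact ne_top_of_le_ne_top g0 (le0 g dg _)
      · exact dsec f df x
      · exact dsec g dg y
      · intro u v
        refine (hh (Fin.cons x u) (Fin.cons y v)).trans (le_of_eq ?_)
        congr 1
        ext i
        refine Fin.cases ?_ (fun j => ?_) i <;> simp

/-! ### Sets -/

lemma amgm (θ α β : ℝ) (hθ : θ ∈ Ioo (0:ℝ) 1) (hα : 0 < α) (hβ : 0 < β) (X Y : ℝ≥0∞) :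
    ENNReal.ofReal (α ^ (1 - θ) * β ^ θ) * (X ^ (1 - θ) * Y ^ θ)
      ≤ ENNReal.ofReal ((1 - θ) * α) * X + ENNReal.ofReal (θ * β) * Y := by
  have t1 : 0 < 1 - θ := by linarith [hθ.2]
  have t0 := hθ.1
  by_cases hX : X = ∞
  · have : ENNReal.ofReal ((1 - θ) * α) * X = ∞ := by
      rw [hX, ENNReal.mul_top]
      simp only [ne_eq, ENNReal.ofReal_eq_zero, not_le]
      positivity
    simp [this]
  by_cases hY : Y = ∞
  · have : ENNReal.ofReal (θ * β) * Y = ∞ := by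
      rw [hY, ENNReal.mul_top]
      simp only [ne_eq, ENNReal.ofReal_eq_zero, not_le]
      positivity
    simp [this]
  obtain ⟨x, hx, rfl⟩ : ∃ x : ℝ, 0 ≤ x ∧ ENNReal.ofReal x = X :=
    ⟨X.toReal, ENNReal.toReal_nonneg, ENNReal.ofReal_toReal hX⟩
  obtain ⟨y, hy, rfl⟩ : ∃ x : ℝ, 0 ≤ x ∧ ENNReal.ofReal x = Y :=
    ⟨Y.toReal, ENNReal.toReal_nonneg, ENNReal.ofReal_toReal hY⟩
  rw [ENNReal.ofReal_rpow_of_nonneg hx t1.le, ENNReal.ofReal_rpow_of_nonneg hy t0.le,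
    ← ENNReal.ofReal_mul (by positivity), ← ENNReal.ofReal_mul (by positivity),
    ← ENNReal.ofReal_mul (by positivity), ← ENNReal.ofReal_mul (by positivity),
    ← ENNReal.ofReal_add (by positivity) (by positivity)]
  apply ENNReal.ofReal_le_ofReal
  have := Real.geom_mean_le_arith_mean2_weighted t1.le t0.le (mul_nonneg hα.le hx)
    (mul_nonneg hβ.le hy) (by ring)
  rw [Real.mul_rpow hα.le hx, Real.mul_rpow hβ.le hy] at this
  linarith

lemma scale1 (φ : ℝ → ℝ) (hm : Measurable φ) (hd : PositivelyDecreasing φ)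
    (lam : ℝ) (hl : lam ∈ Ioo (0:ℝ) 1) (h : ℝ → ℝ≥0∞) (mh : Measurable h) :
    ENNReal.ofReal lam *
        ∫⁻ y, h (lam * y) ∂((volume : Measure ℝ).withDensity fun x => ENNReal.ofReal (φ x))
      ≤ ∫⁻ y, h y ∂((volume : Measure ℝ).withDensity fun x => ENNReal.ofReal (φ x)) := by
  have mF : Measurable fun x => ENNReal.ofReal (φ x) := hm.ennreal_ofReal
  have ml : Measurable fun x : ℝ => lam * x := measurable_const_mul lam
  rw [lintegral_withDensity_eq_lintegral_mul _ mF (show Measurable fun y => h (lam * y) from mh.comp ml),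
    lintegral_withDensity_eq_lintegral_mul _ mF mh]
  have e : ∫⁻ y : ℝ, ((fun x => ENNReal.ofReal (φ x)) * h) y
      = ENNReal.ofReal lam * ∫⁻ y : ℝ, ((fun x => ENNReal.ofReal (φ x)) * h) (lam * y) := by
    have h1 := Real.smul_map_volume_mul_left hl.1.ne'
    rw [abs_of_pos hl.1] at h1
    rw [← lintegral_map (mF.mul mh) ml]
    conv_lhs => rw [← h1]
    rw [lintegral_smul_measure, smul_eq_mul]
  rw [e]
  gcongr with y
  simp only [Pi.mul_apply, Function.comp]
  gcongr
  rcases le_total 0 y with hy | hy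
  · exact hd.1 _ _ (by nlinarith [hl.1]) (by nlinarith [hl.2])
  · have := hd.2 (-(lam * y)) (-y) (by nlinarith [hl.1]) (by nlinarith [hl.2])
    simpa using this

lemma scaleN (lam : ℝ) : ∀ (n : ℕ) (ν : Fin n → Measure ℝ) [∀ i, SigmaFinite (ν i)]
    (_ : ∀ i, ∀ h : ℝ → ℝ≥0∞, Measurable h →
      ENNReal.ofReal lam * ∫⁻ y, h (lam * y) ∂(ν i) ≤ ∫⁻ y, h y ∂(ν i))
    (h : (Fin n → ℝ) → ℝ≥0∞) (_ : Measurable h),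
    ENNReal.ofReal lam ^ n * ∫⁻ y, h (lam • y) ∂(Measure.pi ν) ≤ ∫⁻ y, h y ∂(Measure.pi ν) := by
  intro n
  induction n with
  | zero =>
    intro ν _ hν h mh
    rw [Measure.pi_of_empty ν 0, lintegral_dirac, lintegral_dirac]
    simp
  | succ n ih =>
    intro ν _ hν h mh
    rw [lint_succ ν h mh, lint_succ ν (fun y => h (lam • y)) (mh.comp (measurable_const_smul lam)),
      pow_succ', mul_assoc, ← lintegral_const_mul' _ _ (ENNReal.pow_ne_top ENNReal.ofReal_ne_top)]
    refine le_trans ?_ (hν 0 _ (meas_cons h mh).lintegral_prod_right')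
    gcongr with t
    refine le_trans (le_of_eq ?_) (ih (fun i => ν i.succ) (fun i => hν i.succ)
      (fun y => h (Fin.cons (lam * t) y)) ((meas_cons h mh).comp measurable_prodMk_left))
    congr 2
    ext y
    congr 1
    ext i
    refine Fin.cases ?_ (fun j => ?_) i <;> simp

lemma acN : ∀ (n : ℕ) (ν : Fin n → Measure ℝ) [∀ i, SigmaFinite (ν i)]
    (_ : ∀ i, ν i ≪ (volume : Measure ℝ)) (h : (Fin n → ℝ) → ℝ≥0∞) (_ : Measurable h),
    ∫⁻ y, h y ∂(Measure.pi fun _ : Fin n => (volume : Measure ℝ)) = 0 →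
      ∫⁻ y, h y ∂(Measure.pi ν) = 0 := by
  intro n
  induction n with
  | zero =>
    intro ν _ hν h mh h0
    rw [Measure.pi_of_empty _ 0] at h0 ⊢
    exact h0
  | succ n ih =>
    intro ν _ hν h mh h0
    rw [lint_succ _ h mh] at h0 ⊢
    rw [lintegral_eq_zero_iff (meas_cons h mh).lintegral_prod_right'] at h0 ⊢
    filter_upwards [(hν 0).ae_le h0] with t ht
    exact ih _ (fun i => hν i.succ) _ ((meas_cons h mh).comp measurable_prodMk_left) ht

lemma ac_null {n : ℕ} (ν : Fin n → Measure ℝ) [∀ i, SigmaFinite (ν i)]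
    (hν : ∀ i, ν i ≪ (volume : Measure ℝ)) (S : Set (Fin n → ℝ)) (mS : MeasurableSet S)
    (h : volume S = 0) : Measure.pi ν S = 0 := by
  have := acN n ν hν (S.indicator 1) (measurable_one.indicator mS)
    (by rw [lintegral_indicator_one mS]; exact h)
  rwa [lintegral_indicator_one mS] at this

def StarSet {n : ℕ} (A : Set (Fin n → ℝ)) : Prop :=
  ∀ x ∈ A, ∀ ε : Fin n → ℝ, (∀ i, ε i ∈ Icc (0:ℝ) 1) → ε * x ∈ A

lemma StarSet.fn {n : ℕ} {A : Set (Fin n → ℝ)} (hA : StarSet A) :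
    StarFn (A.indicator (1 : (Fin n → ℝ) → ℝ≥0∞)) := by
  intro x ε hε
  by_cases hx : x ∈ A
  · rw [indicator_of_mem hx, indicator_of_mem (hA x hx ε hε)]; rfl
  · simp [indicator_of_notMem hx]

lemma StarSet.zero {n : ℕ} {A : Set (Fin n → ℝ)} (hA : StarSet A) (h : A.Nonempty) :
    (0 : Fin n → ℝ) ∈ A := by
  obtain ⟨x, hx⟩ := h
  simpa using hA x hx 0 (fun i => by simp)

lemma scale_set {n : ℕ} (hn : 0 < n) (φ : Fin n → ℝ → ℝ) (hm : ∀ i, Measurable (φ i))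
    (hd : ∀ i, PositivelyDecreasing (φ i)) (lam : ℝ) (hl : lam ∈ Ioo (0:ℝ) 1)
    (B C : Set (Fin n → ℝ)) (mB : MeasurableSet B) (mC : MeasurableSet C)
    (hC : ∀ y ∈ B, lam • y ∈ C) :
    ENNReal.ofReal lam * (Measure.pi fun i => (volume : Measure ℝ).withDensity
      fun x => ENNReal.ofReal (φ i x)) B ^ (1/(n:ℝ))
    ≤ (Measure.pi fun i => (volume : Measure ℝ).withDensity
      fun x => ENNReal.ofReal (φ i x)) C ^ (1/(n:ℝ)) := by
  have hn' : (n:ℝ) ≠ 0 := by positivity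
  have key := scaleN lam n (fun i => (volume : Measure ℝ).withDensity
      fun x => ENNReal.ofReal (φ i x)) (fun i h mh => scale1 (φ i) (hm i) (hd i) lam hl h mh)
      (C.indicator 1) (measurable_one.indicator mC)
  rw [lintegral_indicator_one mC] at key
  set μ := (Measure.pi fun i => (volume : Measure ℝ).withDensity
      fun x => ENNReal.ofReal (φ i x))
  have h2 : μ B ≤ ∫⁻ y, C.indicator 1 (lam • y) ∂μ := by
    rw [← lintegral_indicator_one mB]
    apply lintegral_mono
    intro y
    by_cases hy : y ∈ B
    · simp [hy, hC y hy]
    · simp [hy]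
  have h3 : ENNReal.ofReal lam ^ n * μ B ≤ μ C := le_trans (by gcongr) key
  calc ENNReal.ofReal lam * μ B ^ (1/(n:ℝ)) = (ENNReal.ofReal lam ^ n * μ B) ^ (1/(n:ℝ)) := by
        rw [ENNReal.mul_rpow_of_nonneg _ _ (by positivity), ← ENNReal.rpow_natCast,
          ← ENNReal.rpow_mul, mul_one_div_cancel hn', ENNReal.rpow_one]
    _ ≤ _ := by gcongr

lemma bm_sets {n : ℕ} (hn : 0 < n) (φ : Fin n → ℝ → ℝ)
    (hφ0 : ∀ i x, 0 ≤ φ i x) (hm : ∀ i, Measurable (φ i))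
    (hd : ∀ i, PositivelyDecreasing (φ i)) (R : ℝ) (hR : 0 ≤ R)
    (hs : ∀ i x, R < |x| → φ i x = 0)
    (lam : ℝ) (hl : lam ∈ Ioo (0:ℝ) 1)
    (A B C : Set (Fin n → ℝ)) (hA : A.Nonempty) (hB : B.Nonempty)
    (mA : MeasurableSet A) (mB : MeasurableSet B) (mC : MeasurableSet C)
    (sA : StarSet A) (sB : StarSet B)
    (hC : ∀ x ∈ A, ∀ y ∈ B, (1 - lam) • x + lam • y ∈ C)
    (μ : Measure (Fin n → ℝ))
    (hμ : μ = Measure.pi fun i => (volume : Measure ℝ).withDensity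
      fun x => ENNReal.ofReal (φ i x)) :
    ENNReal.ofReal (1 - lam) * μ A ^ (1/(n:ℝ)) + ENNReal.ofReal lam * μ B ^ (1/(n:ℝ))
      ≤ μ C ^ (1/(n:ℝ)) := by
  have hn0 : (0:ℝ) < n := by positivity
  have hl' : 1 - lam ∈ Ioo (0:ℝ) 1 := ⟨by linarith [hl.2], by linarith [hl.1]⟩
  by_cases zA : μ A = 0
  · have := scale_set hn φ hm hd lam hl B C mB mC (fun y hy => by
      simpa using hC 0 (sA.zero hA) y hy)
    rw [← hμ] at this
    rwa [zA, ENNReal.zero_rpow_of_pos (by positivity), mul_zero, zero_add]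
  by_cases zB : μ B = 0
  · have := scale_set hn φ hm hd (1 - lam) hl' A C mA mC (fun y hy => by
      simpa using hC y hy 0 (sB.zero hB))
    rw [← hμ] at this
    rwa [zB, ENNReal.zero_rpow_of_pos (by positivity), mul_zero, add_zero]
  have fin : ∀ i, IsFiniteMeasure ((volume : Measure ℝ).withDensity
      fun x => ENNReal.ofReal (φ i x)) := by
    intro i
    apply isFiniteMeasure_withDensity
    have : ∫⁻ x, ENNReal.ofReal (φ i x) ≤
        ∫⁻ x, (Icc (-R) R).indicator (fun _ => ENNReal.ofReal (φ i 0)) x := by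
      apply lintegral_mono
      intro x
      by_cases hx : x ∈ Icc (-R) R
      · rw [indicator_of_mem hx]
        apply ENNReal.ofReal_le_ofReal
        rcases le_total 0 x with h | h
        · exact (hd i).1 0 x le_rfl h
        · simpa using (hd i).2 0 (-x) le_rfl (by linarith)
      · rw [mem_Icc, ← abs_le, not_le] at hx
        simp [hs i x hx]
    refine ne_top_of_le_ne_top ?_ this
    rw [lintegral_indicator_const measurableSet_Icc, Real.volume_Icc]
    exact ENNReal.mul_ne_top ENNReal.ofReal_ne_top ENNReal.ofReal_ne_top
  have finμ : IsFiniteMeasure μ := by rw [hμ]; infer_instance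
  -- real roots
  have root : ∀ S, μ S ≠ 0 → ∃ a : ℝ, 0 < a ∧ μ S = ENNReal.ofReal (a ^ n)
      ∧ μ S ^ (1/(n:ℝ)) = ENNReal.ofReal a := by
    intro S hS
    have h1 : 0 < (μ S).toReal := ENNReal.toReal_pos hS (measure_ne_top _ _)
    refine ⟨(μ S).toReal ^ (1/(n:ℝ)), by positivity, ?_, ?_⟩
    · rw [one_div, Real.rpow_inv_natCast_pow h1.le hn.ne', ENNReal.ofReal_toReal (measure_ne_top _ _)]
    · rw [← ENNReal.ofReal_rpow_of_pos h1, ENNReal.ofReal_toReal (measure_ne_top _ _)]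
  obtain ⟨a, ha, ea, ea'⟩ := root A zA
  obtain ⟨b, hb, eb, eb'⟩ := root B zB
  have l1 := hl'.1
  have l0 := hl.1
  set m := (1 - lam) * a + lam * b with hmdef
  have hm0 : 0 < m := by positivity
  set θ := lam * b / m with hθdef
  have e1 : 1 - θ = (1 - lam) * a / m := by
    rw [hθdef, eq_div_iff hm0.ne', sub_mul, div_mul_cancel₀ _ hm0.ne']
    rw [hmdef]; ring
  have hθ : θ ∈ Ioo (0:ℝ) 1 := by
    have : 0 < 1 - θ := by rw [e1]; positivity
    exact ⟨by positivity, by linarith⟩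
  have key := funcN lam θ hl hθ (ENNReal.ofReal ((m / a) ^ (1 - θ) * (m / b) ^ θ))
    ENNReal.ofReal_ne_top
    (by
      intro X Y
      have := amgm θ (m / a) (m / b) hθ (by positivity) (by positivity) X Y
      have i1 : (1 - θ) * (m / a) = 1 - lam := by rw [e1]; field_simp
      have i2 : θ * (m / b) = lam := by rw [hθdef]; field_simp
      rwa [i1, i2] at this)
    n (fun i => (volume : Measure ℝ).withDensity fun x => ENNReal.ofReal (φ i x))
    (fun i => bmOne (φ i) (hm i) (hφ0 i) (hd i) R hR (hs i) lam hl)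
    (A.indicator 1) (B.indicator 1) (C.indicator 1) (measurable_one.indicator mA)
    (measurable_one.indicator mB) (measurable_one.indicator mC)
    (by simp [sA.zero hA]) (by simp [sB.zero hB]) sA.fn sB.fn
    (by
      intro x y
      by_cases hx : x ∈ A
      · by_cases hy : y ∈ B
        · simp [hx, hy, hC x hx y hy]
        · simp [hy, hθ.1]
      · simp [hx, hθ.2])
  rw [← hμ, lintegral_indicator_one mA, lintegral_indicator_one mB, lintegral_indicator_one mC,
    ea, eb, ENNReal.ofReal_rpow_of_pos (by positivity), ENNReal.ofReal_rpow_of_pos (by positivity),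
    ← ENNReal.ofReal_pow (by positivity), ← ENNReal.ofReal_mul (by positivity),
    ← ENNReal.ofReal_mul (by positivity)] at key
  have comp : ((m / a) ^ (1 - θ) * (m / b) ^ θ) ^ n * ((a ^ n) ^ (1 - θ) * (b ^ n) ^ θ) = m ^ n := by
    have sw : ∀ (c r : ℝ), 0 < c → (c ^ n) ^ r = (c ^ r) ^ n := by
      intro c r hc
      rw [← Real.rpow_natCast, ← Real.rpow_natCast, ← Real.rpow_mul hc.le, ← Real.rpow_mul hc.le,
        mul_comm]
    rw [sw a _ ha, sw b _ hb, Real.div_rpow hm0.le ha.le, Real.div_rpow hm0.le hb.le,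
      ← mul_pow, ← mul_pow]
    congr 1
    have ua : a ^ (1 - θ) ≠ 0 := (Real.rpow_pos_of_pos ha _).ne'
    have ub : b ^ θ ≠ 0 := (Real.rpow_pos_of_pos hb _).ne'
    have um : m ^ (1 - θ) * m ^ θ = m := by rw [← Real.rpow_add hm0]; simp
    calc _ = (m ^ (1 - θ) * m ^ θ) * (a ^ (1 - θ) / a ^ (1 - θ)) * (b ^ θ / b ^ θ) := by ring
      _ = m := by rw [div_self ua, div_self ub, um]; ring
  rw [comp] at key
  rw [ea', eb', ← ENNReal.ofReal_mul l1.le, ← ENNReal.ofReal_mul l0.le,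
    ← ENNReal.ofReal_add (by positivity) (by positivity), ← hmdef]
  calc ENNReal.ofReal m = ENNReal.ofReal (m ^ n) ^ (1/(n:ℝ)) := by
        rw [ENNReal.ofReal_rpow_of_pos (by positivity), one_div, Real.pow_rpow_inv_natCast hm0.le hn.ne']
    _ ≤ _ := by gcongr

/-! ### Removing the truncation, and convex sets -/

lemma bm_closed {n : ℕ} (hn : 0 < n) (φ : Fin n → ℝ → ℝ)
    (hφ0 : ∀ i x, 0 ≤ φ i x) (hm : ∀ i, Measurable (φ i))
    (hd : ∀ i, PositivelyDecreasing (φ i))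
    (lam : ℝ) (hl : lam ∈ Ioo (0:ℝ) 1)
    (A B C : Set (Fin n → ℝ)) (hA : A.Nonempty) (hB : B.Nonempty)
    (mA : MeasurableSet A) (mB : MeasurableSet B) (mC : MeasurableSet C)
    (sA : StarSet A) (sB : StarSet B)
    (hC : ∀ x ∈ A, ∀ y ∈ B, (1 - lam) • x + lam • y ∈ C)
    (μ : Measure (Fin n → ℝ))
    (hμ : μ = Measure.pi fun i => (volume : Measure ℝ).withDensity
      fun x => ENNReal.ofReal (φ i x)) :
    ENNReal.ofReal (1 - lam) * μ A ^ (1/(n:ℝ)) + ENNReal.ofReal lam * μ B ^ (1/(n:ℝ))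
      ≤ μ C ^ (1/(n:ℝ)) := by
  let box : ℕ → Set (Fin n → ℝ) := fun k => Set.univ.pi fun _ => Icc (-(k:ℝ)) k
  have mbox : ∀ k, MeasurableSet (box k) := fun k => MeasurableSet.univ_pi fun _ => measurableSet_Icc
  have step : ∀ k : ℕ, ENNReal.ofReal (1 - lam) * μ (A ∩ box k) ^ (1/(n:ℝ))
      + ENNReal.ofReal lam * μ (B ∩ box k) ^ (1/(n:ℝ)) ≤ μ (C ∩ box k) ^ (1/(n:ℝ)) := by
    intro k
    have hk : (0:ℝ) ≤ k := Nat.cast_nonneg k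
    have := bm_sets hn (fun i => (Icc (-(k:ℝ)) k).indicator (φ i))
      (fun i x => indicator_nonneg (fun y _ => hφ0 i y) x)
      (fun i => (hm i).indicator measurableSet_Icc)
      (by
        intro i
        constructor
        · intro s t hs hst
          by_cases ht : t ∈ Icc (-(k:ℝ)) k
          · rw [indicator_of_mem ht, indicator_of_mem (show s ∈ Icc (-(k:ℝ)) k from ⟨by linarith, hst.trans ht.2⟩)]
            exact (hd i).1 s t hs hst
          · rw [indicator_of_notMem ht]
            exact indicator_nonneg (fun y _ => hφ0 i y) _
        · intro s t hs hst
          by_cases ht : -t ∈ Icc (-(k:ℝ)) k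
          · rw [indicator_of_mem ht, indicator_of_mem (show -s ∈ Icc (-(k:ℝ)) k from ⟨by linarith [ht.1], by linarith⟩)]
            exact (hd i).2 s t hs hst
          · rw [indicator_of_notMem ht]
            exact indicator_nonneg (fun y _ => hφ0 i y) _)
      k hk
      (by
        intro i x hx
        apply indicator_of_notMem
        rw [mem_Icc, ← abs_le]
        exact not_le.2 hx)
      lam hl A B C hA hB mA mB mC sA sB hC (μ.restrict (box k))
      (by
        rw [hμ, Measure.restrict_pi_pi]
        congr 1
        ext1 i
        rw [restrict_withDensity measurableSet_Icc, ← withDensity_indicator measurableSet_Icc]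
        congr 1
        ext1 x
        by_cases hx : x ∈ Icc (-(k:ℝ)) k <;> simp only [indicator_of_mem, indicator_of_notMem, hx, not_false_eq_true, ENNReal.ofReal_zero])
    rwa [Measure.restrict_apply mA, Measure.restrict_apply mB, Measure.restrict_apply mC] at this
  have lim : ∀ S : Set (Fin n → ℝ), Tendsto (fun k => μ (S ∩ box k) ^ (1/(n:ℝ))) atTop
      (𝓝 (μ S ^ (1/(n:ℝ)))) := by
    intro S
    have mono : Monotone fun k => S ∩ box k := by
      intro j k hjk
      have : (j:ℝ) ≤ k := by exact_mod_cast hjk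
      apply inter_subset_inter_right
      apply Set.pi_mono
      intro i _
      exact Icc_subset_Icc (by linarith) this
    have un : ⋃ k, S ∩ box k = S := by
      rw [← inter_iUnion]
      apply inter_eq_left.2
      intro x _
      obtain ⟨k, hk⟩ := exists_nat_ge ‖x‖
      refine mem_iUnion.2 ⟨k, fun i _ => ?_⟩
      have := (norm_le_pi_norm x i).trans hk
      rw [Real.norm_eq_abs] at this
      exact abs_le.1 this
    have := tendsto_measure_iUnion_atTop (μ := μ) mono
    rw [un] at this
    exact (ENNReal.continuous_rpow_const.tendsto _).comp this
  refine le_of_tendsto_of_tendsto' ?_ (lim C) step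
  exact (ENNReal.Tendsto.const_mul (lim A) (Or.inr ENNReal.ofReal_ne_top)).add
    (ENNReal.Tendsto.const_mul (lim B) (Or.inr ENNReal.ofReal_ne_top))

lemma starSet_of {n : ℕ} {A : Set (Fin n → ℝ)} (hw : WeaklyUnconditional A) (hc : Convex ℝ A) :
    StarSet A := by
  intro x hx ε hε
  let L : (Fin n → ℝ) →ₗ[ℝ] (Fin n → ℝ) := LinearMap.mulRight ℝ x
  have h1 : Set.univ.pi (fun _ : Fin n => ({0, 1} : Set ℝ)) ⊆ L ⁻¹' A := by
    intro e he
    have := hw x hx e (fun i => by simpa using he i (mem_univ i))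
    exact this
  have h2 := convexHull_min h1 (hc.linear_preimage L)
  apply h2
  rw [convexHull_pi]
  intro i _
  rw [convexHull_pair, segment_eq_Icc zero_le_one]
  exact hε i

lemma StarSet.clos {n : ℕ} {A : Set (Fin n → ℝ)} (hA : StarSet A) : StarSet (closure A) := by
  intro x hx ε hε
  exact map_mem_closure (continuous_const.mul continuous_id) hx (fun y hy => hA y hy ε hε)

lemma bm_convex {n : ℕ} (hn : 0 < n) (φ : Fin n → ℝ → ℝ)
    (hφ0 : ∀ i x, 0 ≤ φ i x) (hm : ∀ i, Measurable (φ i))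
    (hd : ∀ i, PositivelyDecreasing (φ i))
    (μ : Measure (Fin n → ℝ))
    (hμ : μ = Measure.pi fun i => (volume : Measure ℝ).withDensity
      fun x => ENNReal.ofReal (φ i x))
    (lam : ℝ) (hl : lam ∈ Ioo (0:ℝ) 1)
    (A B C : Set (Fin n → ℝ)) (hA : A.Nonempty) (hB : B.Nonempty)
    (sA : StarSet A) (sB : StarSet B) (cC : Convex ℝ C)
    (hC : ∀ x ∈ A, ∀ y ∈ B, (1 - lam) • x + lam • y ∈ C) :
    ENNReal.ofReal (1 - lam) * μ A ^ (1/(n:ℝ)) + ENNReal.ofReal lam * μ B ^ (1/(n:ℝ))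
      ≤ μ C ^ (1/(n:ℝ)) := by
  have hfr : μ (frontier C) = 0 := by
    rw [hμ]
    apply ac_null _ (fun i => withDensity_absolutelyContinuous _ _) _ isClosed_frontier.measurableSet
    exact cC.addHaar_frontier volume
  have hcl : μ (closure C) ≤ μ C := by
    calc μ (closure C) ≤ μ (C ∪ frontier C) := measure_mono (by
          rw [closure_eq_self_union_frontier])
      _ ≤ μ C + μ (frontier C) := measure_union_le _ _
      _ = μ C := by rw [hfr, add_zero]
  have := bm_closed hn φ hφ0 hm hd lam hl (closure A) (closure B) (closure C) hA.closure hB.closure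
    isClosed_closure.measurableSet isClosed_closure.measurableSet isClosed_closure.measurableSet
    sA.clos sB.clos
    (by
      intro x hx y hy
      exact map_mem_closure₂ (f := fun x y => (1 - lam) • x + lam • y) (by fun_prop) hx hy hC) μ hμ
  calc _ ≤ ENNReal.ofReal (1 - lam) * μ (closure A) ^ (1/(n:ℝ))
        + ENNReal.ofReal lam * μ (closure B) ^ (1/(n:ℝ)) := by
        gcongr <;> exact subset_closure
    _ ≤ _ := this
    _ ≤ _ := by gcongr

lemma StarSet.smul {n : ℕ} {A : Set (Fin n → ℝ)} (hA : StarSet A) (t : ℝ) : StarSet (t • A) := by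
  rintro _ ⟨x, hx, rfl⟩ ε hε
  refine ⟨ε * x, hA x hx ε hε, ?_⟩
  simp

lemma StarSet.add {n : ℕ} {A B : Set (Fin n → ℝ)} (hA : StarSet A) (hB : StarSet B) :
    StarSet (A + B) := by
  rintro _ ⟨x, hx, y, hy, rfl⟩ ε hε
  exact ⟨ε * x, hA x hx ε hε, ε * y, hB y hy ε hε, by simp [mul_add]⟩

lemma comb_smul {n : ℕ} {A : Set (Fin n → ℝ)} (hA : Convex ℝ A) (lam t s : ℝ)
    (hl : lam ∈ Ioo (0:ℝ) 1) (ht : 0 ≤ t) (hs : 0 ≤ s) (x y : Fin n → ℝ) (hx : x ∈ A) (hy : y ∈ A) :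
    (1 - lam) • t • x + lam • s • y ∈ ((1 - lam) * t + lam * s) • A := by
  rw [hA.add_smul (mul_nonneg (by linarith [hl.2]) ht) (mul_nonneg hl.1.le hs)]
  exact ⟨_, ⟨x, hx, rfl⟩, _, ⟨y, hy, rfl⟩, by simp [mul_smul]⟩

/-- Corollary `c:1/n-concavity`: for a product of measures with
positively decreasing densities and weakly unconditional convex sets `A, B`, the functions
`t ↦ μ(A+tB)^{1/n}` and `t ↦ μ(tA)^{1/n}` are concave on `[0,∞)`. -/
theorem statement12 {n : ℕ} (hn : 0 < n) (φ : Fin n → ℝ → ℝ)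
    (hφ0 : ∀ i x, 0 ≤ φ i x) (hφmeas : ∀ i, Measurable (φ i))
    (hφdec : ∀ i, PositivelyDecreasing (φ i))
    (μ : Measure (Fin n → ℝ))
    (hμ : μ = Measure.pi fun i => (volume : Measure ℝ).withDensity
      fun x => ENNReal.ofReal (φ i x))
    (A B : Set (Fin n → ℝ)) (hA : A.Nonempty) (hB : B.Nonempty)
    (hAw : WeaklyUnconditional A) (hBw : WeaklyUnconditional B)
    (hAc : Convex ℝ A) (hBc : Convex ℝ B) :
    (∀ t s lam : ℝ, 0 ≤ t → 0 ≤ s → lam ∈ Ioo (0:ℝ) 1 →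
      ENNReal.ofReal (1 - lam) * μ (A + t • B) ^ (1/(n:ℝ))
        + ENNReal.ofReal lam * μ (A + s • B) ^ (1/(n:ℝ))
        ≤ μ (A + ((1 - lam) * t + lam * s) • B) ^ (1/(n:ℝ))) ∧
    (∀ t s lam : ℝ, 0 ≤ t → 0 ≤ s → lam ∈ Ioo (0:ℝ) 1 →
      ENNReal.ofReal (1 - lam) * μ (t • A) ^ (1/(n:ℝ))
        + ENNReal.ofReal lam * μ (s • A) ^ (1/(n:ℝ))
        ≤ μ (((1 - lam) * t + lam * s) • A) ^ (1/(n:ℝ))) := by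
  have sA := starSet_of hAw hAc
  have sB := starSet_of hBw hBc
  constructor
  · intro t s lam ht hs hl
    apply bm_convex hn φ hφ0 hφmeas hφdec μ hμ lam hl _ _ _ (hA.add hB.smul_set) (hA.add hB.smul_set)
      (sA.add (sB.smul t)) (sA.add (sB.smul s)) (hAc.add (hBc.smul _))
    rintro _ ⟨x, hx, _, ⟨y, hy, rfl⟩, rfl⟩ _ ⟨x', hx', _, ⟨y', hy', rfl⟩, rfl⟩
    refine ⟨(1 - lam) • x + lam • x', hAc hx hx' (by linarith [hl.2]) hl.1.le (by ring), _,
      comb_smul hBc lam t s hl ht hs y y' hy hy', ?_⟩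
    simp only [smul_add]
    abel
  · intro t s lam ht hs hl
    apply bm_convex hn φ hφ0 hφmeas hφdec μ hμ lam hl _ _ _ hA.smul_set hA.smul_set
      (sA.smul t) (sA.smul s) (hAc.smul _)
    rintro _ ⟨x, hx, rfl⟩ _ ⟨y, hy, rfl⟩
    exact comb_smul hAc lam t s hl ht hs x y hx hy

end
end

section
/- Let μ be the measure on ℝⁿ given by dμ(x)=φ(x)dx, where φ is a p-concave function with −1/n ≤ p ≤ ∞. Let λ∈(0,1) and let A,B⊆ℝⁿ be non-empty measurable sets such that (1−λ)A+λB is also measurable and such that, for some linear hyperplane H of ℝⁿ, sup_{y∈H^⊥} μ̃_{n−1}(A∩(y+H)) = sup_{y∈H^⊥} μ̃_{n−1}(B∩(y+H)). Then μ((1−λ)A+λB) ≥ (1−λ)μ(A) + λμ(B). -/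
open MeasureTheory Set Metric Filter
open scoped ENNReal NNReal Topology Pointwise

noncomputable section

lemma bm1_compact (lam : ℝ) (h0 : 0 < lam) (h1 : lam < 1) (K L C : Set ℝ)
    (hK : IsCompact K) (hL : IsCompact L) (hKn : K.Nonempty) (hLn : L.Nonempty)
    (hC : ∀ x ∈ K, ∀ y ∈ L, (1 - lam) * x + lam * y ∈ C) :
    ENNReal.ofReal (1 - lam) * volume K + ENNReal.ofReal lam * volume L ≤ volume C := by
  obtain ⟨k, hk, hkm⟩ := hK.exists_isGreatest hKn
  obtain ⟨l, hl, hlm⟩ := hL.exists_isLeast hLn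
  have e1 : volume ((fun x => lam * l + x) '' ((1 - lam) • K)) =
      ENNReal.ofReal (1 - lam) * volume K := by
    rw [image_add_left, measure_preimage_add, Measure.addHaar_smul]
    simp [abs_of_pos (sub_pos.2 h1)]
  have e2 : volume ((fun x => (1 - lam) * k + x) '' (lam • L)) =
      ENNReal.ofReal (lam) * volume L := by
    rw [image_add_left, measure_preimage_add, Measure.addHaar_smul]
    simp [abs_of_pos h0]
  have hLs : IsCompact ((fun x => (1 - lam) * k + x) '' (lam • L)) :=
    (hL.smul lam).image (by fun_prop)
  rw [← e1, ← e2, ← measure_union₀ hLs.measurableSet.nullMeasurableSet]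
  · apply measure_mono
    rintro _ (⟨_, ⟨x, hx, rfl⟩, rfl⟩ | ⟨_, ⟨x, hx, rfl⟩, rfl⟩)
    · simpa [add_comm] using hC x hx l hl
    · simpa using hC k hk x hx
  · refine measure_mono_null (t := {(1 - lam) * k + lam * l}) ?_ (by simp)
    rintro z ⟨⟨_, ⟨x, hx, rfl⟩, rfl⟩, ⟨_, ⟨y, hy, rfl⟩, hz⟩⟩
    simp only [smul_eq_mul, mem_singleton_iff] at *
    have := hkm hx
    have := hlm hy
    nlinarith

lemma bm1 (lam : ℝ) (h0 : 0 < lam) (h1 : lam < 1) (X Y C : Set ℝ)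
    (hX : MeasurableSet X) (hY : MeasurableSet Y) (hXn : X.Nonempty) (hYn : Y.Nonempty)
    (hC : ∀ x ∈ X, ∀ y ∈ Y, (1 - lam) * x + lam * y ∈ C) :
    ENNReal.ofReal (1 - lam) * volume X + ENNReal.ofReal lam * volume Y ≤ volume C := by
  obtain ⟨x, hx⟩ := hXn
  obtain ⟨y, hy⟩ := hYn
  have key : ∀ (Z : Set ℝ), MeasurableSet Z → ∀ z ∈ Z,
      volume Z ≤ ⨆ K : {K : Set ℝ // K ⊆ Z ∧ IsCompact K ∧ K.Nonempty}, volume K.1 := by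
    intro Z hZ z hz
    rw [hZ.measure_eq_iSup_isCompact]
    refine iSup_le fun K => iSup_le fun hK => iSup_le fun hKc => ?_
    refine (measure_mono (subset_union_left (t := {z}))).trans
      (le_iSup_of_le ⟨K ∪ {z}, union_subset hK (by simpa using hz),
        hKc.union isCompact_singleton, ⟨z, by simp⟩⟩ le_rfl)
  have nX : Nonempty {K : Set ℝ // K ⊆ X ∧ IsCompact K ∧ K.Nonempty} :=
    ⟨⟨{x}, by simpa using hx, isCompact_singleton, by simp⟩⟩
  have nY : Nonempty {K : Set ℝ // K ⊆ Y ∧ IsCompact K ∧ K.Nonempty} :=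
    ⟨⟨{y}, by simpa using hy, isCompact_singleton, by simp⟩⟩
  refine (add_le_add (mul_le_mul_right (key X hX x hx) _) (mul_le_mul_right (key Y hY y hy) _)).trans ?_
  simp_rw [ENNReal.mul_iSup]
  refine ENNReal.iSup_add_iSup_le fun K L => ?_
  exact bm1_compact lam h0 h1 K.1 L.1 C K.2.2.1 L.2.2.1 K.2.2.2 L.2.2.2
    fun a ha b hb => hC a (K.2.1 ha) b (L.2.1 hb)

lemma layer_s15 {α : Type*} [MeasurableSpace α] (ν : Measure α) [SFinite ν] (f : α → ℝ≥0∞)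
    (hf : Measurable f) :
    ∫⁻ x, f x ∂ν = ∫⁻ t in Ioi (0:ℝ), ν {x | ENNReal.ofReal t < f x} := by
  have hS : MeasurableSet {q : α × ℝ | ENNReal.ofReal q.2 < f q.1} :=
    measurableSet_lt (by fun_prop) (by fun_prop)
  have e1 : ∀ x, f x = ∫⁻ t in Ioi (0:ℝ),
      ({q : α × ℝ | ENNReal.ofReal q.2 < f q.1}).indicator (1 : α × ℝ → ℝ≥0∞) (x, t) := by
    intro x
    have : (fun t : ℝ => ({q : α × ℝ | ENNReal.ofReal q.2 < f q.1}).indicator (1 : α × ℝ → ℝ≥0∞) (x, t))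
       = ({t : ℝ | ENNReal.ofReal t < f x}).indicator 1 := by
      ext t; simp [indicator]
    have hm : MeasurableSet {t : ℝ | ENNReal.ofReal t < f x} :=
      measurableSet_lt (by fun_prop) (by fun_prop)
    rw [this, lintegral_indicator_one hm, Measure.restrict_apply hm]
    by_cases hx : f x = ∞
    · have : {t : ℝ | ENNReal.ofReal t < f x} ∩ Ioi 0 = Ioi 0 := by ext; simp [hx]
      rw [this, hx]; simp
    · have : {t : ℝ | ENNReal.ofReal t < f x} ∩ Ioi 0 = Ioo 0 (f x).toReal := by
        ext t
        simp only [mem_inter_iff, mem_ofPred_eq, mem_Ioi, mem_Ioo, and_comm (b := 0 < t)]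
        refine and_congr_right fun ht => ?_
        rw [ENNReal.ofReal_lt_iff_lt_toReal ht.le hx]
      rw [this]; simp [hx]
  rw [lintegral_congr e1, lintegral_lintegral_swap]
  · refine lintegral_congr fun t => ?_
    have hm : MeasurableSet {x | ENNReal.ofReal t < f x} :=
      measurableSet_lt (by fun_prop) (by fun_prop)
    rw [← lintegral_indicator_one hm]
    refine lintegral_congr fun x => ?_
    simp [indicator]
  · exact (measurable_one.indicator hS).aemeasurable

lemma core (lam : ℝ) (h0 : 0 < lam) (h1 : lam < 1) (f g h : ℝ → ℝ≥0∞)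
    (hf : Measurable f) (hg : Measurable g) (hh : Measurable h)
    (H : ∀ x y, min (f x) (g y) ≤ h ((1 - lam) * x + lam * y))
    (hs : ⨆ x, f x = ⨆ x, g x) :
    ENNReal.ofReal (1 - lam) * (∫⁻ x, f x) + ENNReal.ofReal lam * (∫⁻ x, g x) ≤ ∫⁻ x, h x := by
  rw [layer_s15 _ f hf, layer_s15 _ g hg, layer_s15 _ h hh, ← lintegral_const_mul' _ _ (by simp),
    ← lintegral_const_mul' _ _ (by simp)]
  refine (le_lintegral_add _ _).trans (lintegral_mono fun t => ?_)
  by_cases ht : ENNReal.ofReal t < ⨆ x, f x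
  · have ht2 : ENNReal.ofReal t < ⨆ x, g x := hs ▸ ht
    have n1 : ({x | ENNReal.ofReal t < f x} : Set ℝ).Nonempty := by
      obtain ⟨x, hx⟩ := lt_iSup_iff.1 ht
      exact ⟨x, hx⟩
    have n2 : ({x | ENNReal.ofReal t < g x} : Set ℝ).Nonempty := by
      obtain ⟨x, hx⟩ := lt_iSup_iff.1 ht2
      exact ⟨x, hx⟩
    refine bm1 lam h0 h1 {x | ENNReal.ofReal t < f x} {x | ENNReal.ofReal t < g x} _ (measurableSet_lt (by fun_prop) (by fun_prop))
      (measurableSet_lt (by fun_prop) (by fun_prop)) n1 n2 ?_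
    intro x hx y hy
    exact (lt_min hx hy).trans_le (H x y)
  · have ht' := ht
    rw [hs] at ht'
    rw [lt_iSup_iff] at ht ht'
    push Not at ht ht'
    have e1 : {x | ENNReal.ofReal t < f x} = ∅ := by ext x; simp [ht x]
    have e2 : {x | ENNReal.ofReal t < g x} = ∅ := by ext x; simp [ht' x]
    simp [e1, e2]

noncomputable def MM (lam : ℝ) (k : ℕ) (a b : ℝ≥0∞) : ℝ≥0∞ :=
  if k = 0 then min a b
  else (ENNReal.ofReal (1 - lam) * a ^ (-(1 / (k:ℝ))) + ENNReal.ofReal lam * b ^ (-(1 / (k:ℝ)))) ^ (-(k:ℝ))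

lemma MM_mono (lam : ℝ) (k : ℕ) {a b a' b' : ℝ≥0∞} (ha : a ≤ a') (hb : b ≤ b') :
    MM lam k a b ≤ MM lam k a' b' := by
  unfold MM
  split_ifs with hk
  · exact min_le_min ha hb
  · simp only [ENNReal.rpow_neg]
    gcongr

lemma MM_tendsto (lam : ℝ) (k : ℕ) {a b : ℝ≥0∞} {u v : ℕ → ℝ≥0∞}
    (hu : Tendsto u atTop (𝓝 a)) (hv : Tendsto v atTop (𝓝 b)) :
    Tendsto (fun n => MM lam k (u n) (v n)) atTop (𝓝 (MM lam k a b)) := by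
  unfold MM
  split_ifs with hk
  · exact hu.min hv
  · refine (ENNReal.continuous_rpow_const.tendsto _).comp ?_
    exact (ENNReal.Tendsto.const_mul ((ENNReal.continuous_rpow_const.tendsto _).comp hu) (by simp)).add
     (ENNReal.Tendsto.const_mul ((ENNReal.continuous_rpow_const.tendsto _).comp hv) (by simp))

lemma MM_zero_left (lam : ℝ) (h1 : lam < 1) (k : ℕ) (b : ℝ≥0∞) : MM lam k 0 b = 0 := by
  unfold MM
  split_ifs with hk
  · simp
  · have : 0 < (k:ℝ) := by positivity
    have h2 : -(1 / (k:ℝ)) < 0 := by simpa using this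
    rw [ENNReal.zero_rpow_of_neg h2, ENNReal.mul_top (by simpa using h1), top_add,
      ENNReal.top_rpow_of_neg (by linarith)]

lemma MM_zero_right (lam : ℝ) (h0 : 0 < lam) (k : ℕ) (b : ℝ≥0∞) : MM lam k b 0 = 0 := by
  unfold MM
  split_ifs with hk
  · simp
  · have : 0 < (k:ℝ) := by positivity
    have h2 : -(1 / (k:ℝ)) < 0 := by simpa using this
    rw [ENNReal.zero_rpow_of_neg h2, ENNReal.mul_top (by simpa using h0), add_top,
      ENNReal.top_rpow_of_neg (by linarith)]

lemma MM_ofReal (lam : ℝ) (h0 : 0 < lam) (h1 : lam < 1) (k : ℕ) (hk : k ≠ 0) {u v : ℝ}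
    (hu : 0 < u) (hv : 0 < v) :
    MM lam k (ENNReal.ofReal (u ^ k)⁻¹) (ENNReal.ofReal (v ^ k)⁻¹) =
      ENNReal.ofReal (((1 - lam) * u + lam * v) ^ k)⁻¹ := by
  have h1' : 0 < 1 - lam := by linarith
  have key : ∀ u : ℝ, 0 < u → ENNReal.ofReal (u ^ k)⁻¹ ^ (-(1 / (k:ℝ))) = ENNReal.ofReal u := by
    intro u hu
    rw [ENNReal.ofReal_rpow_of_pos (by positivity), ← Real.rpow_natCast, ← Real.rpow_neg hu.le,
      ← Real.rpow_mul hu.le]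
    congr 1
    have : (k:ℝ) ≠ 0 := by positivity
    have : -(k:ℝ) * -(1 / (k:ℝ)) = 1 := by field_simp
    rw [this, Real.rpow_one]
  unfold MM
  rw [if_neg hk, key u hu, key v hv, ← ENNReal.ofReal_mul h1'.le, ← ENNReal.ofReal_mul h0.le,
    ← ENNReal.ofReal_add (by positivity) (by positivity), ENNReal.ofReal_rpow_of_pos (by positivity),
    Real.rpow_neg (by positivity), Real.rpow_natCast]

lemma exists_repr (k : ℕ) (hk : k ≠ 0) {a : ℝ≥0∞} (ha : a ≠ 0) (ha' : a ≠ ∞) :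
    ∃ u : ℝ, 0 < u ∧ a = ENNReal.ofReal (u ^ k)⁻¹ := by
  have hp : 0 < a.toReal := ENNReal.toReal_pos ha ha'
  refine ⟨a.toReal ^ (-(1 / (k:ℝ))), by positivity, ?_⟩
  rw [← Real.rpow_natCast, ← Real.rpow_mul hp.le, ← Real.rpow_neg hp.le]
  have : (k:ℝ) ≠ 0 := by positivity
  have : -(-(1 / (k:ℝ)) * k) = 1 := by field_simp
  rw [this, Real.rpow_one, ENNReal.ofReal_toReal ha']

lemma MM_pos (lam : ℝ) (h0 : 0 < lam) (h1 : lam < 1) (k : ℕ) (hk : k ≠ 0) {a b : ℝ≥0∞}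
    (ha : a ≠ 0) (ha' : a ≠ ∞) (hb : b ≠ 0) (hb' : b ≠ ∞) :
    MM lam k a b ≠ 0 ∧ MM lam k a b ≠ ∞ := by
  obtain ⟨u, hu, rfl⟩ := exists_repr k hk ha ha'
  obtain ⟨v, hv, rfl⟩ := exists_repr k hk hb hb'
  have h1' : 0 < 1 - lam := by linarith
  rw [MM_ofReal lam h0 h1 k hk hu hv]
  refine ⟨?_, by simp⟩
  simp only [ne_eq, ENNReal.ofReal_eq_zero, not_le]
  positivity

lemma MM_smul (lam : ℝ) (h0 : 0 < lam) (h1 : lam < 1) (k : ℕ) (hk : k ≠ 0) {a b m : ℝ≥0∞}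
    (ha : a ≠ 0) (ha' : a ≠ ∞) (hb : b ≠ 0) (hb' : b ≠ ∞) (hm : m ≠ 0) (hm' : m ≠ ∞) :
    MM lam k (m * a) (m * b) = m * MM lam k a b := by
  obtain ⟨u, hu, rfl⟩ := exists_repr k hk ha ha'
  obtain ⟨v, hv, rfl⟩ := exists_repr k hk hb hb'
  obtain ⟨w, hw, rfl⟩ := exists_repr k hk hm hm'
  have h1' : 0 < 1 - lam := by linarith
  rw [MM_ofReal lam h0 h1 k hk hu hv, ← ENNReal.ofReal_mul (by positivity),
    ← ENNReal.ofReal_mul (by positivity), ← ENNReal.ofReal_mul (by positivity),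
    ← mul_inv, ← mul_inv, ← mul_inv, ← mul_pow, ← mul_pow, ← mul_pow,
    MM_ofReal lam h0 h1 k hk (by positivity) (by positivity)]
  congr 3
  ring

lemma MM_norm (lam : ℝ) (h0 : 0 < lam) (h1 : lam < 1) (k : ℕ) (hk : k ≠ 0) {a b α β : ℝ≥0∞}
    (ha : α ≠ 0) (ha' : α ≠ ∞) (hb : β ≠ 0) (hb' : β ≠ ∞) (haα : a ≤ α) :
    min (a / α) (b / β) * MM lam k α β ≤ MM lam k a b := by
  set m := min (a / α) (b / β) with hmdef
  by_cases hm : m = 0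
  · simp [hm]
  have hm' : m ≠ ∞ := by
    refine ne_top_of_le_ne_top (b := 1) (by simp) ((min_le_left _ _).trans ?_)
    exact ENNReal.div_le_of_le_mul (by simpa using haα)
  rw [← MM_smul lam h0 h1 k hk ha ha' hb hb' hm hm']
  apply MM_mono
  · exact (ENNReal.le_div_iff_mul_le (.inl ha) (.inl ha')).1 (min_le_left _ _)
  · exact (ENNReal.le_div_iff_mul_le (.inl hb) (.inl hb')).1 (min_le_right _ _)

lemma radon (lam : ℝ) (h0 : 0 < lam) (h1 : lam < 1) (k : ℕ) {u v s t : ℝ}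
    (hu : 0 < u) (hv : 0 < v) (hs : 0 < s) (ht : 0 < t) :
    (((1 - lam) * u + lam * v) ^ k)⁻¹ ≤ (((1 - lam) * s + lam * t) ^ (k + 1))⁻¹ *
      ((1 - lam) * ((u ^ k)⁻¹ / (s ^ (k+1))⁻¹) + lam * ((v ^ k)⁻¹ / (t ^ (k+1))⁻¹)) := by
  have h1' : 0 < 1 - lam := by linarith
  set U := (1 - lam) * u + lam * v with hU
  have hUp : 0 < U := by positivity
  have hS : 0 < (1 - lam) * s + lam * t := by positivity
  have hsu : s / u ∈ Ici (0:ℝ) := (div_pos hs hu).le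
  have htv : t / v ∈ Ici (0:ℝ) := (div_pos ht hv).le
  have hw1 : 0 ≤ (1 - lam) * u / U := by positivity
  have hw2 : 0 ≤ lam * v / U := by positivity
  have hw3 : (1 - lam) * u / U + lam * v / U = 1 := by
    rw [← add_div, ← hU]; field_simp
  have := (convexOn_pow (𝕜 := ℝ) (k + 1)).2 hsu htv hw1 hw2 hw3
  simp only [smul_eq_mul] at this
  have e : (1 - lam) * u / U * (s / u) + lam * v / U * (t / v) = ((1 - lam) * s + lam * t) / U := by
    field_simp
  rw [e, div_pow, div_le_iff₀ (by positivity)] at this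
  rw [inv_mul_eq_div, le_div_iff₀ (by positivity), inv_mul_eq_div, div_le_iff₀ (by positivity)]
  refine this.trans (le_of_eq ?_)
  simp only [pow_succ, div_pow]
  field_simp

lemma MM_alg (lam : ℝ) (h0 : 0 < lam) (h1 : lam < 1) (k : ℕ) {F G α β : ℝ≥0∞}
    (ha : α ≠ 0) (ha' : α ≠ ∞) (hb : β ≠ 0) (hb' : β ≠ ∞) (hF : F ≠ 0) (hG : G ≠ 0) :
    MM lam k F G ≤ MM lam (k+1) α β *
      (ENNReal.ofReal (1 - lam) * (F / α) + ENNReal.ofReal lam * (G / β)) := by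
  have h1' : 0 < 1 - lam := by linarith
  have hc := MM_pos lam h0 h1 (k+1) (by simp) ha ha' hb hb'
  by_cases hF' : F = ∞
  · rw [hF', ENNReal.top_div_of_ne_top ha', ENNReal.mul_top (by simpa using h1), top_add,
      ENNReal.mul_top hc.1]
    exact le_top
  by_cases hG' : G = ∞
  · rw [hG', ENNReal.top_div_of_ne_top hb', ENNReal.mul_top (by simpa using h0), add_top,
      ENNReal.mul_top hc.1]
    exact le_top
  obtain ⟨s, hs, rfl⟩ := exists_repr (k+1) (by simp) ha ha'
  obtain ⟨t, ht, rfl⟩ := exists_repr (k+1) (by simp) hb hb'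
  rw [MM_ofReal lam h0 h1 (k+1) (by simp) hs ht]
  by_cases hk : k = 0
  · subst hk
    set m := min F G
    have hS : 0 < (1 - lam) * s + lam * t := by positivity
    have e : m = ENNReal.ofReal (((1 - lam) * s + lam * t) ^ (0+1))⁻¹ *
      (ENNReal.ofReal (1 - lam) * (m / ENNReal.ofReal (s ^ (0+1))⁻¹) +
        ENNReal.ofReal lam * (m / ENNReal.ofReal (t ^ (0+1))⁻¹)) := by
      have hm' : m ≠ ∞ := ne_top_of_le_ne_top hF' (min_le_left _ _)
      rw [← ENNReal.ofReal_toReal hm', ← ENNReal.ofReal_div_of_pos (by positivity),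
        ← ENNReal.ofReal_div_of_pos (by positivity), ← ENNReal.ofReal_mul (by positivity),
        ← ENNReal.ofReal_mul (by positivity), ← ENNReal.ofReal_add (by positivity) (by positivity),
        ← ENNReal.ofReal_mul (by positivity)]
      congr 1
      field_simp
      ring
    have e2 : MM lam 0 F G = m := by simp [MM, m]
    rw [e2]
    refine e.le.trans ?_
    gcongr
    · exact min_le_left _ _
    · exact min_le_right _ _
  · obtain ⟨u, hu, rfl⟩ := exists_repr k hk hF hF'
    obtain ⟨v, hv, rfl⟩ := exists_repr k hk hG hG'
    rw [MM_ofReal lam h0 h1 k hk hu hv, ← ENNReal.ofReal_div_of_pos (by positivity),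
        ← ENNReal.ofReal_div_of_pos (by positivity), ← ENNReal.ofReal_mul (by positivity),
        ← ENNReal.ofReal_mul (by positivity), ← ENNReal.ofReal_add (by positivity) (by positivity),
        ← ENNReal.ofReal_mul (by positivity)]
    exact ENNReal.ofReal_le_ofReal (radon lam h0 h1 k hu hv hs ht)

lemma step_bdd (lam : ℝ) (h0 : 0 < lam) (h1 : lam < 1) (k : ℕ) (f g h : ℝ → ℝ≥0∞)
    (hf : Measurable f) (hg : Measurable g) (hh : Measurable h)
    (hfb : ⨆ x, f x ≠ ∞) (hgb : ⨆ x, g x ≠ ∞)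
    (H : ∀ x y, MM lam (k+1) (f x) (g y) ≤ h ((1 - lam) * x + lam * y)) :
    MM lam k (∫⁻ x, f x) (∫⁻ x, g x) ≤ ∫⁻ x, h x := by
  by_cases hF : ∫⁻ x, f x = 0
  · rw [hF, MM_zero_left lam h1]; exact zero_le
  by_cases hG : ∫⁻ x, g x = 0
  · rw [hG, MM_zero_right lam h0]; exact zero_le
  set α := ⨆ x, f x with hα
  set β := ⨆ x, g x with hβ
  have ha : α ≠ 0 := by
    intro h
    apply hF
    have : ∀ x, f x = 0 := fun x => le_antisymm (h ▸ le_iSup f x) zero_le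
    simp [this]
  have hb : β ≠ 0 := by
    intro h
    apply hG
    have : ∀ x, g x = 0 := fun x => le_antisymm (h ▸ le_iSup g x) zero_le
    simp [this]
  have hc := MM_pos lam h0 h1 (k+1) (by simp) ha hfb hb hgb
  set c := MM lam (k+1) α β with hcdef
  have := core lam h0 h1 (fun x => f x / α) (fun x => g x / β) (fun x => h x / c)
    (by fun_prop) (by fun_prop) (by fun_prop) ?_ ?_
  · simp only [div_eq_mul_inv] at this
    rw [lintegral_mul_const _ hf, lintegral_mul_const _ hg, lintegral_mul_const _ hh,
      ← div_eq_mul_inv, ← div_eq_mul_inv, ← div_eq_mul_inv,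
      ENNReal.le_div_iff_mul_le (.inl hc.1) (.inl hc.2), mul_comm] at this
    exact (MM_alg lam h0 h1 k ha hfb hb hgb hF hG).trans this
  · intro x y
    rw [ENNReal.le_div_iff_mul_le (.inl hc.1) (.inl hc.2)]
    exact (MM_norm lam h0 h1 (k+1) (by simp) ha hfb hb hgb (le_iSup f x)).trans (H x y)
  · rw [← ENNReal.iSup_div, ← ENNReal.iSup_div, ENNReal.div_self ha hfb, ENNReal.div_self hb hgb]

lemma trunc_tendsto (f : ℝ → ℝ≥0∞) (hf : Measurable f) :
    Tendsto (fun N : ℕ => ∫⁻ x, min (f x) N) atTop (𝓝 (∫⁻ x, f x)) := by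
  apply lintegral_tendsto_of_tendsto_of_monotone
  · intro N; exact (hf.min measurable_const).aemeasurable
  · refine ae_of_all _ fun x m n hmn => ?_
    dsimp only
    gcongr
  · refine ae_of_all _ fun x => ?_
    have := (tendsto_const_nhds (x := f x) (f := atTop (α := ℕ))).min ENNReal.tendsto_nat_nhds_top
    simpa using this

lemma step (lam : ℝ) (h0 : 0 < lam) (h1 : lam < 1) (k : ℕ) (f g h : ℝ → ℝ≥0∞)
    (hf : Measurable f) (hg : Measurable g) (hh : Measurable h)
    (H : ∀ x y, MM lam (k+1) (f x) (g y) ≤ h ((1 - lam) * x + lam * y)) :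
    MM lam k (∫⁻ x, f x) (∫⁻ x, g x) ≤ ∫⁻ x, h x := by
  refine le_of_tendsto' (MM_tendsto lam k (trunc_tendsto f hf) (trunc_tendsto g hg)) fun N => ?_
  refine step_bdd lam h0 h1 k _ _ h (hf.min measurable_const) (hg.min measurable_const) hh ?_ ?_ ?_
  · exact ne_top_of_le_ne_top (ENNReal.natCast_ne_top N) (iSup_le fun x => min_le_right _ _)
  · exact ne_top_of_le_ne_top (ENNReal.natCast_ne_top N) (iSup_le fun x => min_le_right _ _)
  · exact fun x y => (MM_mono lam _ (min_le_left _ _) (min_le_left _ _)).trans (H x y)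

lemma bbl (lam : ℝ) (h0 : 0 < lam) (h1 : lam < 1) (m : ℕ) : ∀ (k : ℕ) (f g h : (Fin m → ℝ) → ℝ≥0∞),
    Measurable f → Measurable g → Measurable h →
    (∀ x y, MM lam (k+m) (f x) (g y) ≤ h ((1 - lam) • x + lam • y)) →
    MM lam k (∫⁻ x, f x) (∫⁻ x, g x) ≤ ∫⁻ x, h x := by
  induction m with
  | zero =>
    intro k f g h hf hg hh H
    have : ∀ f : (Fin 0 → ℝ) → ℝ≥0∞, ∫⁻ x, f x = f 0 := by
      intro f
      rw [volume_pi, Measure.pi_of_empty (fun _ => volume) (0 : Fin 0 → ℝ), lintegral_dirac]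
    rw [this, this, this]
    simpa using H 0 0
  | succ m ih =>
    intro k f g h hf hg hh H
    set e := MeasurableEquiv.piFinSuccAbove (fun _ : Fin (m+1) => ℝ) 0 with he
    have hmp := (volume_preserving_piFinSuccAbove (fun _ : Fin (m+1) => ℝ) 0).symm
    have hes : ∀ (t : ℝ) (w : Fin m → ℝ), e.symm (t, w) = Fin.cons t w := by
      intro t w
      simp [e, MeasurableEquiv.piFinSuccAbove]
      rfl
    have key : ∀ f : (Fin (m+1) → ℝ) → ℝ≥0∞, Measurable f →
        ∫⁻ x, f x = ∫⁻ w : Fin m → ℝ, ∫⁻ t : ℝ, f (Fin.cons t w) := by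
      intro f hf
      rw [← hmp.lintegral_comp hf]
      rw [Measure.volume_eq_prod, lintegral_prod_symm]
      · simp_rw [← hes]; rfl
      · exact (hf.comp e.symm.measurable).aemeasurable
    have meas : ∀ f : (Fin (m+1) → ℝ) → ℝ≥0∞, Measurable f →
        Measurable (fun q : (Fin m → ℝ) × ℝ => f (Fin.cons q.2 q.1)) := by
      intro f hf
      simp_rw [← hes]
      exact (hf.comp e.symm.measurable).comp measurable_swap
    rw [key f hf, key g hg, key h hh]
    refine ih k _ _ _ (meas f hf).lintegral_prod_right' (meas g hg).lintegral_prod_right'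
      (meas h hh).lintegral_prod_right' fun w w' => ?_
    refine step lam h0 h1 (k+m) _ _ _ ((meas f hf).comp measurable_prodMk_left)
      ((meas g hg).comp measurable_prodMk_left) ((meas h hh).comp measurable_prodMk_left) ?_
    intro x y
    refine (H (Fin.cons x w) (Fin.cons y w')).trans (le_of_eq ?_)
    congr 1
    ext i
    refine Fin.cases ?_ (fun j => ?_) i <;> simp

lemma geo_le_max (lam : ℝ) (h0 : 0 < lam) (h1 : lam < 1) {a b : ℝ} (ha : 0 < a) (hb : 0 < b) :
    a ^ (1 - lam) * b ^ lam ≤ max a b := by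
  have hm : 0 < max a b := lt_max_of_lt_left ha
  calc a ^ (1 - lam) * b ^ lam ≤ (max a b) ^ (1 - lam) * (max a b) ^ lam := by
        have h1' : 0 ≤ 1 - lam := sub_nonneg.2 h1.le
        gcongr
        · exact le_max_left _ _
        · exact le_max_right _ _
    _ = max a b := by rw [← Real.rpow_add hm]; simp

lemma min_le_geo (lam : ℝ) (h0 : 0 < lam) (h1 : lam < 1) {a b : ℝ} (ha : 0 < a) (hb : 0 < b) :
    min a b ≤ a ^ (1 - lam) * b ^ lam := by
  have hm : 0 < min a b := lt_min ha hb
  calc min a b = (min a b) ^ (1 - lam) * (min a b) ^ lam := by rw [← Real.rpow_add hm]; simp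
    _ ≤ a ^ (1 - lam) * b ^ lam := by
        have h1' : 0 ≤ 1 - lam := sub_nonneg.2 h1.le
        gcongr
        · exact min_le_left _ _
        · exact min_le_right _ _

lemma geo_le_pos (lam : ℝ) (h0 : 0 < lam) (h1 : lam < 1) {a b p : ℝ} (ha : 0 < a) (hb : 0 < b)
    (hp : 0 < p) :
    a ^ (1 - lam) * b ^ lam ≤ ((1 - lam) * a ^ p + lam * b ^ p) ^ (1 / p) := by
  have h := Real.geom_mean_le_arith_mean2_weighted (sub_nonneg.2 h1.le) h0.le
    (Real.rpow_nonneg ha.le p) (Real.rpow_nonneg hb.le p) (by ring)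
  have e : a ^ (1 - lam) * b ^ lam = ((a ^ p) ^ (1 - lam) * (b ^ p) ^ lam) ^ (1 / p) := by
    rw [Real.mul_rpow (by positivity) (by positivity), ← Real.rpow_mul ha.le, ← Real.rpow_mul hb.le,
      ← Real.rpow_mul ha.le, ← Real.rpow_mul hb.le]
    congr 2 <;> field_simp
  rw [e]
  gcongr

lemma MM_ofReal' (lam : ℝ) (h0 : 0 < lam) (h1 : lam < 1) (k : ℕ) (hk : k ≠ 0) {a b : ℝ}
    (ha : 0 < a) (hb : 0 < b) :
    MM lam k (ENNReal.ofReal a) (ENNReal.ofReal b) =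
      ENNReal.ofReal (((1 - lam) * a ^ (-(1 / (k:ℝ))) + lam * b ^ (-(1 / (k:ℝ)))) ^ k)⁻¹ := by
  have h1' : 0 < 1 - lam := by linarith
  unfold MM
  rw [if_neg hk, ENNReal.ofReal_rpow_of_pos ha, ENNReal.ofReal_rpow_of_pos hb,
    ← ENNReal.ofReal_mul h1'.le, ← ENNReal.ofReal_mul h0.le,
    ← ENNReal.ofReal_add (by positivity) (by positivity), ENNReal.ofReal_rpow_of_pos (by positivity),
    Real.rpow_neg (by positivity), Real.rpow_natCast]

lemma MM_le_geo (lam : ℝ) (h0 : 0 < lam) (h1 : lam < 1) (m : ℕ) {a b : ℝ}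
    (ha : 0 < a) (hb : 0 < b) :
    MM lam m (ENNReal.ofReal a) (ENNReal.ofReal b) ≤ ENNReal.ofReal (a ^ (1 - lam) * b ^ lam) := by
  have h1' : 0 < 1 - lam := by linarith
  by_cases hm : m = 0
  · subst hm
    simp only [MM, if_true]
    rw [← ENNReal.ofReal_min]
    exact ENNReal.ofReal_le_ofReal (min_le_geo lam h0 h1 ha hb)
  rw [MM_ofReal' lam h0 h1 m hm ha hb]
  apply ENNReal.ofReal_le_ofReal
  set r := -(1 / (m:ℝ)) with hr
  have hm' : (m:ℝ) ≠ 0 := by positivity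
  have h := Real.geom_mean_le_arith_mean2_weighted h1'.le h0.le
    (Real.rpow_nonneg ha.le r) (Real.rpow_nonneg hb.le r) (by ring)
  have e : a ^ (1 - lam) * b ^ lam = (((a ^ r) ^ (1 - lam) * (b ^ r) ^ lam) ^ m)⁻¹ := by
    rw [← Real.rpow_natCast, ← Real.rpow_neg (by positivity),
      Real.mul_rpow (by positivity) (by positivity), ← Real.rpow_mul ha.le, ← Real.rpow_mul hb.le,
      ← Real.rpow_mul ha.le, ← Real.rpow_mul hb.le]
    congr 2 <;> (rw [hr]; field_simp)
  rw [e]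
  gcongr

lemma MM_le_neg (lam : ℝ) (h0 : 0 < lam) (h1 : lam < 1) (m : ℕ) {a b p : ℝ}
    (ha : 0 < a) (hb : 0 < b) (hp : p < 0) (hpm : -1 / ((m + 1 : ℕ) : ℝ) ≤ p) :
    MM lam m (ENNReal.ofReal a) (ENNReal.ofReal b) ≤
      ENNReal.ofReal (((1 - lam) * a ^ p + lam * b ^ p) ^ (1 / p)) := by
  have h1' : 0 < 1 - lam := by linarith
  by_cases hm : m = 0
  · subst hm
    simp only [MM, if_true]
    rw [← ENNReal.ofReal_min]
    apply ENNReal.ofReal_le_ofReal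
    set c := min a b with hcdef
    have hc : 0 < c := lt_min ha hb
    have hac : a ^ p ≤ c ^ p := Real.rpow_le_rpow_of_nonpos hc (min_le_left _ _) hp.le
    have hbc : b ^ p ≤ c ^ p := Real.rpow_le_rpow_of_nonpos hc (min_le_right _ _) hp.le
    have hX : (1 - lam) * a ^ p + lam * b ^ p ≤ c ^ p := by nlinarith
    have e : c = (c ^ p) ^ (1 / p) := by
      rw [← Real.rpow_mul hc.le]
      have : p * (1 / p) = 1 := mul_one_div_cancel hp.ne
      rw [this, Real.rpow_one]
    rw [e]
    exact Real.rpow_le_rpow_of_nonpos (by positivity) hX (by simpa using hp.le)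
  rw [MM_ofReal' lam h0 h1 m hm ha hb]
  apply ENNReal.ofReal_le_ofReal
  set r := -(1 / (m:ℝ)) with hr
  have hm' : 0 < (m:ℝ) := by positivity
  have hrp : r ≤ p := by
    refine le_trans ?_ hpm
    rw [hr, neg_div, neg_le_neg_iff]
    push_cast
    apply one_div_le_one_div_of_le hm'
    linarith
  have hs : 1 ≤ r / p := by
    rw [le_div_iff_of_neg hp]; linarith
  have hJ := (convexOn_rpow hs).2 (Real.rpow_nonneg ha.le p : a ^ p ∈ Ici (0:ℝ))
    (Real.rpow_nonneg hb.le p : b ^ p ∈ Ici (0:ℝ)) h1'.le h0.le (by ring)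
  simp only [smul_eq_mul] at hJ
  have hpr : p * (r / p) = r := mul_div_cancel₀ r hp.ne
  rw [← Real.rpow_mul ha.le, ← Real.rpow_mul hb.le, hpr] at hJ
  set X := (1 - lam) * a ^ p + lam * b ^ p with hX
  have hXp : 0 < X := by positivity
  have e : X ^ (1 / p) = ((X ^ (r / p)) ^ m)⁻¹ := by
    rw [← Real.rpow_natCast, ← Real.rpow_neg (by positivity), ← Real.rpow_mul hXp.le]
    congr 1
    rw [hr]; field_simp
  rw [e]
  gcongr

lemma MM_le_MpR (lam : ℝ) (h0 : 0 < lam) (h1 : lam < 1) (m : ℕ) (p : EReal)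
    (hp : ((-1 / ((m + 1 : ℕ) : ℝ) : ℝ) : EReal) ≤ p) {a b : ℝ} (ha : 0 ≤ a) (hb : 0 ≤ b) :
    MM lam m (ENNReal.ofReal a) (ENNReal.ofReal b) ≤ ENNReal.ofReal (MpR p lam a b) := by
  rcases ha.eq_or_lt with rfl | ha
  · simp [MM_zero_left lam h1]
  rcases hb.eq_or_lt with rfl | hb
  · simp [MM_zero_right lam h0]
  have hne : ¬ (a = 0 ∨ b = 0) := by
    rintro (h | h) <;> linarith
  unfold MpR
  rw [if_neg hne]
  have hg := MM_le_geo lam h0 h1 m ha hb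
  induction p using EReal.rec with
  | bot => simp at hp
  | top =>
    rw [if_pos rfl]
    exact hg.trans (ENNReal.ofReal_le_ofReal (geo_le_max lam h0 h1 ha hb))
  | coe p =>
    rw [if_neg (EReal.coe_ne_top p), if_neg (EReal.coe_ne_bot p)]
    rw [EReal.coe_le_coe_iff] at hp
    rcases lt_trichotomy p 0 with hp0 | rfl | hp0
    · rw [if_neg (by simpa using hp0.ne), EReal.toReal_coe]
      exact MM_le_neg lam h0 h1 m ha hb hp0 hp
    · simpa using hg
    · rw [if_neg (by simpa using hp0.ne'), EReal.toReal_coe]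
      exact hg.trans (ENNReal.ofReal_le_ofReal (geo_le_pos lam h0 h1 ha hb hp0))

lemma haar_transfer {E F : Type*} [NormedAddCommGroup E] [NormedSpace ℝ E] [FiniteDimensional ℝ E]
    [MeasurableSpace E] [BorelSpace E] [NormedAddCommGroup F] [NormedSpace ℝ F]
    [FiniteDimensional ℝ F] [MeasurableSpace F] [BorelSpace F] (L : E ≃L[ℝ] F)
    (ν : Measure E) [ν.IsAddHaarMeasure] (ν' : Measure F) [ν'.IsAddHaarMeasure] :
    ∃ c : ℝ≥0∞, ∀ f : E → ℝ≥0∞, Measurable f → ∫⁻ x, f x ∂ν = c * ∫⁻ y, f (L.symm y) ∂ν' := by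
  have hH : (ν.map L).IsAddHaarMeasure := L.isAddHaarMeasure_map ν
  refine ⟨Measure.addHaarScalarFactor (ν.map L) ν', fun f hf => ?_⟩
  have h1 : ∫⁻ x, f x ∂ν = ∫⁻ y, f (L.symm y) ∂(ν.map L) := by
    have h2 : Measurable fun y => f (L.symm y) := hf.comp L.symm.continuous.measurable
    rw [lintegral_map h2 L.continuous.measurable]
    simp
  have h3 := Measure.isAddLeftInvariant_eq_smul (ν.map L) ν'
  calc ∫⁻ x, f x ∂ν = ∫⁻ y, f (L.symm y) ∂(ν.map L) := h1
    _ = ∫⁻ y, f (L.symm y) ∂(Measure.addHaarScalarFactor (ν.map L) ν' • ν') :=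
        congrArg (fun κ => ∫⁻ y, f (L.symm y) ∂κ) h3
    _ = _ := lintegral_smul_measure (R := ℝ≥0) _ _

lemma bblV {V : Type*} [NormedAddCommGroup V] [NormedSpace ℝ V] [FiniteDimensional ℝ V]
    [MeasurableSpace V] [BorelSpace V] (ν : Measure V) [ν.IsAddHaarMeasure] (m : ℕ)
    (hm : Module.finrank ℝ V = m) (lam : ℝ) (h0 : 0 < lam) (h1 : lam < 1) (f g h : V → ℝ≥0∞)
    (hf : Measurable f) (hg : Measurable g) (hh : Measurable h)
    (H : ∀ x y, MM lam m (f x) (g y) ≤ h ((1 - lam) • x + lam • y)) :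
    min (∫⁻ x, f x ∂ν) (∫⁻ x, g x ∂ν) ≤ ∫⁻ x, h x ∂ν := by
  let L : V ≃L[ℝ] (Fin m → ℝ) := ContinuousLinearEquiv.ofFinrankEq (by simp [hm])
  obtain ⟨c, hc⟩ := haar_transfer L ν (volume : Measure (Fin m → ℝ))
  have hL : Measurable L.symm := L.symm.continuous.measurable
  have := bbl lam h0 h1 m 0 (fun y => f (L.symm y)) (fun y => g (L.symm y)) (fun y => h (L.symm y))
    (hf.comp hL) (hg.comp hL) (hh.comp hL) (fun x y => by
      simpa using H (L.symm x) (L.symm y))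
  rw [hc f hf, hc g hg, hc h hh]
  simp only [MM, if_true] at this
  rcases min_le_iff.1 this with h | h
  · exact (min_le_left _ _).trans (by gcongr)
  · exact (min_le_right _ _).trans (by gcongr)

/-- Theorem `t:BM_lineal_med_2`: linear Brunn–Minkowski inequality for a
measure on `ℝⁿ` with `p`-concave density (`-1/n ≤ p ≤ ∞`) and sets having equal maximal
marginal measure sections with respect to a linear hyperplane `H`. The `(n-1)`-dimensional
Lebesgue measure on affine hyperplanes is realized as the `(n-1)`-dimensional Hausdorff
measure. -/
theorem statement15 {n : ℕ} (hn : 0 < n)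
    (p : EReal) (hp : ((-1/(n:ℝ) : ℝ) : EReal) ≤ p)
    (φ : EuclideanSpace ℝ (Fin n) → ℝ) (hφ0 : ∀ x, 0 ≤ φ x) (hφmeas : Measurable φ)
    (hφconc : PConcaveFn p φ)
    (μ : Measure (EuclideanSpace ℝ (Fin n)))
    (hμ : μ = (volume : Measure (EuclideanSpace ℝ (Fin n))).withDensity
      fun x => ENNReal.ofReal (φ x))
    (H : Submodule ℝ (EuclideanSpace ℝ (Fin n))) (hH : Module.finrank ℝ H = n - 1)
    (lam : ℝ) (hlam : lam ∈ Ioo (0:ℝ) 1)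
    (A B : Set (EuclideanSpace ℝ (Fin n))) (hA : A.Nonempty) (hB : B.Nonempty)
    (hAm : MeasurableSet A) (hBm : MeasurableSet B)
    (hCm : MeasurableSet ((1 - lam) • A + lam • B))
    (hsup : (⨆ y : Hᗮ, ∫⁻ z in A ∩ {z | z - (y : EuclideanSpace ℝ (Fin n)) ∈ H},
              ENNReal.ofReal (φ z) ∂(μH[((n:ℝ) - 1)]))
          = ⨆ y : Hᗮ, ∫⁻ z in B ∩ {z | z - (y : EuclideanSpace ℝ (Fin n)) ∈ H},
              ENNReal.ofReal (φ z) ∂(μH[((n:ℝ) - 1)])) :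
    ENNReal.ofReal (1 - lam) * μ A + ENNReal.ofReal lam * μ B
      ≤ μ ((1 - lam) • A + lam • B) := by
  obtain ⟨h0, h1⟩ := hlam
  obtain ⟨m, rfl⟩ : ∃ m, n = m + 1 := ⟨n - 1, by omega⟩
  have hHm : Module.finrank ℝ H = m := by simpa using hH
  have hd : (((m + 1 : ℕ) : ℝ) - 1) = (Module.finrank ℝ H : ℝ) := by rw [hHm]; push_cast; ring
  rw [hd] at hsup
  set C := (1 - lam) • A + lam • B with hC
  -- the direction orthogonal to `H`
  have hperp : Module.finrank ℝ Hᗮ = 1 := by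
    have := Submodule.finrank_add_finrank_orthogonal H
    rw [hHm, finrank_euclideanSpace_fin] at this
    omega
  obtain ⟨e, he0, hespan⟩ := finrank_eq_one_iff'.1 hperp
  -- the coordinates
  let T0 : (ℝ × H) →ₗ[ℝ] EuclideanSpace ℝ (Fin (m + 1)) :=
    (LinearMap.toSpanSingleton ℝ (EuclideanSpace ℝ (Fin (m + 1))) (e : EuclideanSpace ℝ (Fin (m + 1)))).coprod H.subtype
  have hT0 : ∀ t w, T0 (t, w) = t • (e : EuclideanSpace ℝ (Fin (m + 1))) + (w : EuclideanSpace ℝ (Fin (m + 1))) := by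
    intro t w; simp [T0]
  have hinj : Function.Injective T0 := by
    rw [← LinearMap.ker_eq_bot, LinearMap.ker_eq_bot']
    rintro ⟨t, w⟩ htw
    rw [hT0] at htw
    have hmem : t • (e : EuclideanSpace ℝ (Fin (m + 1))) ∈ H := by
      rw [eq_neg_of_add_eq_zero_left htw]; exact H.neg_mem w.2
    have hmem' : t • (e : EuclideanSpace ℝ (Fin (m + 1))) ∈ Hᗮ := Hᗮ.smul_mem _ e.2
    have hz : t • (e : EuclideanSpace ℝ (Fin (m + 1))) = 0 := by
      have := (Submodule.mem_orthogonal H _).1 hmem' _ hmem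
      exact inner_self_eq_zero.1 this
    have ht : t = 0 := by
      rcases smul_eq_zero.1 hz with h | h
      · exact h
      · exact absurd (Subtype.ext h) he0
    have hw : w = 0 := by
      rw [hz, zero_add] at htw
      exact Subtype.ext htw
    simp [ht, hw]
  let T : (ℝ × H) ≃L[ℝ] EuclideanSpace ℝ (Fin (m + 1)) := (LinearMap.linearEquivOfInjective T0 hinj (by
    rw [Module.finrank_prod, hHm, finrank_euclideanSpace_fin]; simp [add_comm])).toContinuousLinearEquiv
  have hT : ∀ t w, T (t, w) = t • (e : EuclideanSpace ℝ (Fin (m + 1))) + (w : EuclideanSpace ℝ (Fin (m + 1))) := hT0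
  let ν : Measure H := μH[(Module.finrank ℝ H : ℝ)]
  have hν : ν.IsAddHaarMeasure := isAddHaarMeasure_hausdorffMeasure
  obtain ⟨c, hc⟩ := haar_transfer T.symm (volume : Measure (EuclideanSpace ℝ (Fin (m + 1)))) ((volume : Measure ℝ).prod ν)
  let F : Set (EuclideanSpace ℝ (Fin (m + 1))) → EuclideanSpace ℝ (Fin (m + 1)) → ℝ≥0∞ := fun S => S.indicator fun x => ENNReal.ofReal (φ x)
  have hFm : ∀ S, MeasurableSet S → Measurable (F S) := fun S hS =>
    (ENNReal.measurable_ofReal.comp hφmeas).indicator hS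
  have hTm : Measurable T := T.continuous.measurable
  have hFT : ∀ S, MeasurableSet S → Measurable fun q : ℝ × H => F S (T q) := fun S hS =>
    (hFm S hS).comp hTm
  let G : Set (EuclideanSpace ℝ (Fin (m + 1))) → ℝ → ℝ≥0∞ := fun S t => ∫⁻ w, F S (T (t, w)) ∂ν
  have hGm : ∀ S, MeasurableSet S → Measurable (G S) := fun S hS =>
    (hFT S hS).lintegral_prod_right'
  have hμS : ∀ S, MeasurableSet S → μ S = c * ∫⁻ t, G S t := by
    intro S hS
    rw [hμ, withDensity_apply _ hS, ← lintegral_indicator hS, hc _ (hFm S hS)]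
    exact congrArg (c * ·) (lintegral_prod _ (hFT S hS).aemeasurable)
  have hsec : ∀ S, MeasurableSet S → ∀ t : ℝ,
      G S t = ∫⁻ z in S ∩ {z | z - ((t • e : Hᗮ) : EuclideanSpace ℝ (Fin (m + 1))) ∈ H},
        ENNReal.ofReal (φ z) ∂(μH[(Module.finrank ℝ H : ℝ)]) := by
    intro S hS t
    have hiso : Isometry (fun w : H => T (t, w)) := by
      refine Isometry.of_dist_eq fun x y => ?_
      simp only [hT, dist_add_left]
      rfl
    have hmap := hiso.map_hausdorffMeasure (d := (Module.finrank ℝ H : ℝ)) (.inl (by positivity))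
    have hrange : range (fun w : H => T (t, w)) = {z | z - ((t • e : Hᗮ) : EuclideanSpace ℝ (Fin (m + 1))) ∈ H} := by
      ext z
      constructor
      · rintro ⟨w, rfl⟩
        change T (t, w) - ((t • e : Hᗮ) : EuclideanSpace ℝ (Fin (m + 1))) ∈ H
        rw [hT]
        simp
      · intro hz
        exact ⟨⟨_, hz⟩, by simp [hT]⟩
    rw [← hrange, ← Measure.restrict_restrict hS, ← hmap, ← lintegral_indicator hS]
    exact (lintegral_map (hFm S hS) hiso.continuous.measurable).symm
  have hsup' : ∀ S, MeasurableSet S → ⨆ t, G S t = ⨆ y : Hᗮ, ∫⁻ z in S ∩ {z | z - (y : EuclideanSpace ℝ (Fin (m + 1))) ∈ H},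
        ENNReal.ofReal (φ z) ∂(μH[(Module.finrank ℝ H : ℝ)]) := by
    intro S hS
    refine Function.Surjective.iSup_congr (fun t : ℝ => t • e) (fun y => hespan y) fun t => ?_
    exact (hsec S hS t).symm
  have hcore := core lam h0 h1 (G A) (G B) (G C) (hGm A hAm) (hGm B hBm) (hGm C hCm) ?_
    (by rw [hsup' A hAm, hsup' B hBm]; exact hsup)
  · rw [hμS A hAm, hμS B hBm, hμS C hCm]
    calc _ = c * (ENNReal.ofReal (1 - lam) * (∫⁻ t, G A t) + ENNReal.ofReal lam * ∫⁻ t, G B t) := by ring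
      _ ≤ _ := by gcongr
  · intro x y
    refine bblV ν m hHm lam h0 h1 _ _ _ ((hFT A hAm).comp measurable_prodMk_left)
      ((hFT B hBm).comp measurable_prodMk_left) ((hFT C hCm).comp measurable_prodMk_left) ?_
    intro w w'
    change MM lam m (F A (T (x, w))) (F B (T (y, w'))) ≤
      F C (T ((1 - lam) * x + lam * y, (1 - lam) • w + lam • w'))
    have hTc : T ((1 - lam) * x + lam * y, (1 - lam) • w + lam • w') =
        (1 - lam) • T (x, w) + lam • T (y, w') := by
      rw [← map_smul, ← map_smul, ← map_add]; rfl
    rw [hTc]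
    by_cases ha : T (x, w) ∈ A
    swap
    · simp [F, ha, MM_zero_left lam h1]
    by_cases hb : T (y, w') ∈ B
    swap
    · simp [F, hb, MM_zero_right lam h0]
    have hcc : (1 - lam) • T (x, w) + lam • T (y, w') ∈ C :=
      add_mem_add (smul_mem_smul_set ha) (smul_mem_smul_set hb)
    simp only [F, indicator_of_mem ha, indicator_of_mem hb, indicator_of_mem hcc]
    refine (MM_le_MpR lam h0 h1 m p hp (hφ0 _) (hφ0 _)).trans ?_
    exact ENNReal.ofReal_le_ofReal (hφconc _ _ lam ⟨h0, h1⟩)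

end
end
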